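/- arXiv:1708.09358 — 6 statements merged into one kernel-verified Lean document; each statement's English description precedes it below -/
import Mathlib

section
/- The group of units of the order 𝔟 = ℤ·1 + ℤ·i + ℤ·h + ℤ·l is exactly the twelve-element set {±1, ±i, ±h, ±l, ±ih, ±il}; it has order 12 and is isomorphic to the dicyclic group of order 12 (the binary dihedral group D₁₂). -/
/- STATEMENT 2: With h = (i + √3·j)/2 and l = (1 + √3·k)/2, the group of units of the
order 𝔟 = ℤ·1 + ℤ·i + ℤ·h + ℤ·l is exactly the twelve-element set
{±1, ±i, ±h, ±l, ±ih, ±il}; it has order 12 and is isomorphic to the dicyclic group of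
order 12 (the binary dihedral group D₁₂, `QuaternionGroup 3` in Mathlib). -/

open scoped Quaternion

/-- The quaternion `i`. -/
noncomputable def qi : ℍ[ℝ] := ⟨0, 1, 0, 0⟩
/-- The quaternion `j`. -/
noncomputable def qj : ℍ[ℝ] := ⟨0, 0, 1, 0⟩
/-- The quaternion `k`. -/
noncomputable def qk : ℍ[ℝ] := ⟨0, 0, 0, 1⟩
/-- The quaternion `h = (i + √3 j)/2`. -/
noncomputable def qh : ℍ[ℝ] := (qi + (Real.sqrt 3 : ℝ) • qj) / 2
/-- The quaternion `l = (1 + √3 k)/2`. -/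
noncomputable def ql : ℍ[ℝ] := (1 + (Real.sqrt 3 : ℝ) • qk) / 2

/-!
Since `h = l * i` and `il = l⁻¹i`, an element `a + bi + ch + dl` of the order is
`(a + dl) + (b + cl)i` with `l` a primitive sixth root of unity: its norm is the sum of the
Eisenstein norms `a² + ad + d²` and `b² + bc + c²`. A unit has norm `1`, so one summand vanishes and
the other is an Eisenstein unit `± 1`, `± l`, `± (1 - l)`. Hence the units are `lᵐ` and `lᵐi`, and
`l³ = i²` together with `i l i⁻¹ = l⁻¹` is the presentation of the dicyclic group of order `12`.
-/

section Dicyclic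

variable {G : Type*} [Group G] {n : ℕ} {a x : G}

theorem pow_two_mul_eq_one_of_semiconjBy_inv (hsq : x ^ 2 = a ^ n) (hconj : SemiconjBy x a a⁻¹) :
    a ^ (2 * n) = 1 := by
  have hinv : x * a ^ n = (a ^ n)⁻¹ * x := inv_pow a n ▸ hconj.pow_right n
  have hcomm : x * a ^ n = a ^ n * x := by rw [← hsq, ← pow_succ, ← pow_succ']
  have hself : a ^ n = (a ^ n)⁻¹ := mul_right_cancel (hcomm.symm.trans hinv)
  rw [two_mul, pow_add, ← eq_inv_iff_mul_eq_one]
  exact hself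

theorem zpow_mul_eq_mul_zpow_neg (hconj : SemiconjBy x a a⁻¹) (k : ℤ) :
    a ^ k * x = x * a ^ (-k) := by
  simpa using (hconj.zpow_right (-k)).eq.symm

theorem zpow_cast_intCast_zmod {m : ℕ} (ha : a ^ m = 1) (k : ℤ) :
    a ^ ((k : ZMod m).cast : ℤ) = a ^ k := by
  rw [ZMod.coe_intCast, ← zpow_eq_zpow_emod k (by rwa [zpow_natCast])]

/-- The homomorphism from the dicyclic group of order `4 * n` given by its presentation
`⟨a, x | x² = aⁿ, x a x⁻¹ = a⁻¹⟩`; the element `QuaternionGroup.xa i` stands for `x * a ^ i`. -/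
def dicyclicLift (hsq : x ^ 2 = a ^ n) (hconj : SemiconjBy x a a⁻¹) : QuaternionGroup n →* G :=
  MonoidHom.mk' (fun | .a i => a ^ (i.cast : ℤ) | .xa i => x * a ^ (i.cast : ℤ)) <| by
    have hpow := zpow_cast_intCast_zmod (pow_two_mul_eq_one_of_semiconjBy_inv hsq hconj)
    have hcomm := zpow_mul_eq_mul_zpow_neg hconj
    rintro (i | i) (j | j) <;> obtain ⟨k, rfl⟩ := ZMod.intCast_surjective i <;>
      obtain ⟨l, rfl⟩ := ZMod.intCast_surjective j
    · simp only [QuaternionGroup.a_mul_a, ← Int.cast_add, hpow, zpow_add]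
    · simp only [QuaternionGroup.a_mul_xa, ← Int.cast_sub, hpow]
      rw [← mul_assoc, hcomm, mul_assoc, ← zpow_add, neg_add_eq_sub]
    · simp only [QuaternionGroup.xa_mul_a, ← Int.cast_add, hpow, zpow_add, mul_assoc]
    · simp only [QuaternionGroup.xa_mul_xa, ← Int.cast_natCast (R := ZMod (2 * n)) n,
        ← Int.cast_add, ← Int.cast_sub, hpow]
      calc a ^ (n + l - k) = x ^ 2 * a ^ (-k) * a ^ l := by
            rw [hsq, ← zpow_natCast, ← zpow_add, ← zpow_add]; ring_nf
        _ = x * a ^ k * (x * a ^ l) := by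
            rw [sq, mul_assoc x x, ← hcomm]; group

theorem dicyclicLift_a (hsq : x ^ 2 = a ^ n) (hconj : SemiconjBy x a a⁻¹) (k : ℤ) :
    dicyclicLift hsq hconj (.a k) = a ^ k :=
  zpow_cast_intCast_zmod (pow_two_mul_eq_one_of_semiconjBy_inv hsq hconj) k

theorem dicyclicLift_xa (hsq : x ^ 2 = a ^ n) (hconj : SemiconjBy x a a⁻¹) (k : ℤ) :
    dicyclicLift hsq hconj (.xa k) = x * a ^ k :=
  congrArg (x * ·) (dicyclicLift_a hsq hconj k)

theorem notMem_zpowers_of_orderOf_eq_two_mul (hsq : x ^ 2 = a ^ n) (hconj : SemiconjBy x a a⁻¹)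
    (ha : orderOf a = 2 * n) : x ∉ Subgroup.zpowers a := by
  rintro ⟨k, rfl⟩
  have hself : a = a⁻¹ := mul_right_cancel ((Commute.self_zpow a k).eq.trans hconj.eq)
  have ha2 : a ^ 2 = 1 := by rw [sq, ← eq_inv_iff_mul_eq_one]; exact hself
  have han : a ^ n = 1 := by
    rw [← hsq, ← zpow_natCast, zpow_comm, zpow_natCast, ha2, one_zpow]
  have h2 : 2 * n ∣ 2 := ha ▸ orderOf_dvd_of_pow_eq_one ha2
  have hn : 2 * n ∣ n := ha ▸ orderOf_dvd_of_pow_eq_one han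
  have hpos : 0 < 2 * n := Nat.pos_of_dvd_of_pos h2 two_pos
  have := Nat.le_of_dvd (by lia) hn
  lia

theorem dicyclicLift_injective (hsq : x ^ 2 = a ^ n) (hconj : SemiconjBy x a a⁻¹)
    (ha : orderOf a = 2 * n) : Function.Injective (dicyclicLift hsq hconj) := by
  rw [injective_iff_map_eq_one]
  rintro (i | i) hi <;> obtain ⟨k, rfl⟩ := ZMod.intCast_surjective i
  · rw [dicyclicLift_a, ← orderOf_dvd_iff_zpow_eq_one, ha] at hi
    rw [(ZMod.intCast_zmod_eq_zero_iff_dvd k _).mpr hi, QuaternionGroup.a_zero]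
  · rw [dicyclicLift_xa, mul_eq_one_iff_eq_inv] at hi
    exact absurd (hi ▸ inv_mem (Subgroup.zpow_mem_zpowers a k))
      (notMem_zpowers_of_orderOf_eq_two_mul hsq hconj ha)

theorem dicyclicLift_surjective (hsq : x ^ 2 = a ^ n) (hconj : SemiconjBy x a a⁻¹)
    (hgen : Subgroup.closure {a, x} = ⊤) : Function.Surjective (dicyclicLift hsq hconj) := by
  rw [← MonoidHom.range_eq_top, eq_top_iff, ← hgen, Subgroup.closure_le]
  rintro _ (rfl | rfl)
  · exact ⟨.a (1 : ℤ), by rw [dicyclicLift_a, zpow_one]⟩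
  · exact ⟨.xa (0 : ℤ), by rw [dicyclicLift_xa, zpow_zero, mul_one]⟩

theorem nonempty_mulEquiv_quaternionGroup (hsq : x ^ 2 = a ^ n) (hconj : SemiconjBy x a a⁻¹)
    (ha : orderOf a = 2 * n) (hgen : Subgroup.closure {a, x} = ⊤) :
    Nonempty (G ≃* QuaternionGroup n) :=
  ⟨(MulEquiv.ofBijective (dicyclicLift hsq hconj)
    ⟨dicyclicLift_injective hsq hconj ha, dicyclicLift_surjective hsq hconj hgen⟩).symm⟩

end Dicyclic

section NormForm

variable {K : Type*} [CommRing K] [LinearOrder K] [IsStrictOrderedRing K] {a b : K}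

theorem sq_add_mul_add_sq_nonneg : 0 ≤ a ^ 2 + a * b + b ^ 2 := by
  nlinarith [sq_nonneg (a + b), sq_nonneg a, sq_nonneg b]

theorem sq_add_mul_add_sq_eq_zero (h : a ^ 2 + a * b + b ^ 2 = 0) : a = 0 ∧ b = 0 := by
  constructor <;> rw [← sq_eq_zero_iff] <;>
    nlinarith [sq_nonneg (a + b), sq_nonneg a, sq_nonneg b]

end NormForm

theorem sq_add_mul_add_sq_eq_one {a b : ℤ} (h : a ^ 2 + a * b + b ^ 2 = 1) :
    (a, b) ∈ ({(1, 0), (-1, 0), (0, 1), (0, -1), (1, -1), (-1, 1)} : Set (ℤ × ℤ)) := by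
  have ha : -1 ≤ a ∧ a ≤ 1 := by constructor <;> nlinarith [sq_nonneg (a + 2 * b)]
  have hb : -1 ≤ b ∧ b ≤ 1 := by constructor <;> nlinarith [sq_nonneg (b + 2 * a)]
  obtain ⟨ha₁, ha₂⟩ := ha
  obtain ⟨hb₁, hb₂⟩ := hb
  interval_cases a <;> interval_cases b <;> simp at h ⊢

theorem exists_unit_coe_eq_of_pow_eq_one {M S : Type*} [Monoid M] [SetLike S M]
    [SubmonoidClass S M] {N : S} {q : M} (hq : q ∈ N) {m : ℕ} (hm : m ≠ 0) (hpow : q ^ m = 1) :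
    ∃ u : (N : Type _)ˣ, ((u : N) : M) = q :=
  ⟨.ofPowEqOne ⟨q, hq⟩ m (Subtype.ext hpow) hm, rfl⟩

theorem orderOf_coe_coe_unit {M S : Type*} [Monoid M] [SetLike S M] [SubmonoidClass S M] {N : S}
    (u : (N : Type _)ˣ) : orderOf ((u : N) : M) = orderOf u :=
  (orderOf_injective (SubmonoidClass.subtype N) Subtype.val_injective _).trans orderOf_units

theorem normSq_coe_unit_eq_one {K : Type*} [CommRing K] [LinearOrder K] [IsStrictOrderedRing K]
    {R : Subring ℍ[K]} (hR : ∀ q ∈ R, ∃ m : ℤ, Quaternion.normSq q = m) (u : Rˣ) :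
    Quaternion.normSq ((u : R) : ℍ[K]) = 1 := by
  obtain ⟨m, hm⟩ := hR _ (u : R).2
  obtain ⟨m', hm'⟩ := hR _ ((u⁻¹ : Rˣ) : R).2
  have hnonneg : 0 ≤ m := by exact_mod_cast hm ▸ Quaternion.normSq_nonneg
  have hmul : (m * m' : K) = 1 := by
    rw [← hm, ← hm', ← map_mul, ← Subring.coe_mul, Units.mul_inv, Subring.coe_one, map_one]
  rw [hm, Int.eq_one_of_mul_eq_one_right hnonneg (by exact_mod_cast hmul), Int.cast_one]

theorem quaternion_div_ofNat {K : Type*} [Field K] [LinearOrder K] [IsStrictOrderedRing K]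
    (q : ℍ[K]) (n : ℕ) [n.AtLeastTwo] : q / ofNat(n) = (ofNat(n) : K)⁻¹ • q := by
  rw [div_eq_mul_inv, ← Quaternion.mul_coe_eq_smul, Quaternion.coe_inv]
  rfl

attribute [simps] qi qj qk

theorem qi_sq : qi ^ 2 = -1 := by
  ext <;> simp [sq]

theorem ql_sq : ql ^ 2 = ql - 1 := by
  ext <;> norm_num [sq, ql, quaternion_div_ofNat, mul_mul_mul_comm _ √3 _ √3]
  ring

theorem ql_mul_qi : ql * qi = qh := by
  ext <;> simp [ql, qh, quaternion_div_ofNat]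

theorem qi_mul_ql : qi * ql = qi - qh := by
  ext <;> norm_num [ql, qh, quaternion_div_ofNat]

theorem qi_mul_qh : qi * qh = ql - 1 := by
  calc qi * qh = qi * ql * qi := by rw [← ql_mul_qi, mul_assoc]
    _ = qi ^ 2 - ql * qi ^ 2 := by rw [qi_mul_ql, ← ql_mul_qi]; noncomm_ring
    _ = ql - 1 := by rw [qi_sq]; noncomm_ring

theorem ql_mul_qi_mul_ql : ql * (qi * ql) = qi := by
  calc ql * (qi * ql) = (ql - ql ^ 2) * qi := by rw [qi_mul_ql, ← ql_mul_qi]; noncomm_ring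
    _ = qi := by rw [ql_sq]; noncomm_ring

theorem ql_pow_three : ql ^ 3 = -1 := by
  calc ql ^ 3 = ql * (ql - 1) := by rw [pow_succ', ql_sq]
    _ = ql ^ 2 - ql := by noncomm_ring
    _ = -1 := by rw [ql_sq, sub_sub_cancel_left]

theorem orderOf_ql : orderOf ql = 6 := by
  have hpow_three : ql ^ 3 ≠ 1 :=
    ne_of_apply_ne QuaternionAlgebra.re (by norm_num [ql_pow_three])
  have hpow_two : ql ^ 2 ≠ 1 :=
    ne_of_apply_ne QuaternionAlgebra.re (by rw [ql_sq]; norm_num [ql, quaternion_div_ofNat])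
  refine orderOf_eq_of_pow_and_pow_div_prime (by norm_num)
    (by rw [pow_mul ql 3 2, ql_pow_three, neg_one_sq]) fun p hp hdvd ↦ ?_
  obtain rfl | rfl : p = 2 ∨ p = 3 := by
    have := Nat.le_of_dvd (by norm_num) hdvd
    interval_cases p <;> revert hp hdvd <;> decide
  exacts [hpow_three, hpow_two]

/-- The twelve quaternions `±1, ±i, ±h, ±l, ±ih, ±il`. -/
def dicyclicUnits : Set ℍ[ℝ] :=
  {1, -1, qi, -qi, qh, -qh, ql, -ql, qi * qh, -(qi * qh), qi * ql, -(qi * ql)}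

/-- The element `a + bi + ch + dl` of the order, with integer coordinates `a, b, c, d`. -/
noncomputable def orderElem (a b c d : ℤ) : ℍ[ℝ] :=
  (a : ℍ[ℝ]) + (b : ℍ[ℝ]) * qi + (c : ℍ[ℝ]) * qh + (d : ℍ[ℝ]) * ql

section OrderElem

variable (a b c d : ℤ)

theorem re_orderElem : (orderElem a b c d).re = a + d / 2 := by
  simp [orderElem, ql, qh, quaternion_div_ofNat, ← div_eq_mul_inv]

theorem imI_orderElem : (orderElem a b c d).imI = b + c / 2 := by
  simp [orderElem, ql, qh, quaternion_div_ofNat, ← div_eq_mul_inv]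

theorem imJ_orderElem : (orderElem a b c d).imJ = c * (√3 / 2) := by
  simp [orderElem, ql, qh, quaternion_div_ofNat, ← div_eq_inv_mul]

theorem imK_orderElem : (orderElem a b c d).imK = d * (√3 / 2) := by
  simp [orderElem, ql, qh, quaternion_div_ofNat, ← div_eq_inv_mul]

theorem normSq_orderElem :
    Quaternion.normSq (orderElem a b c d) =
      ((a ^ 2 + a * d + d ^ 2) + (b ^ 2 + b * c + c ^ 2) : ℤ) := by
  have h3 : √3 ^ 2 = 3 := by simp
  rw [Quaternion.normSq_def', re_orderElem, imI_orderElem, imJ_orderElem, imK_orderElem]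
  push_cast
  linear_combination (c ^ 2 / 4 + d ^ 2 / 4 : ℝ) * h3

end OrderElem

theorem orderElem_mem_dicyclicUnits {a b c d : ℤ}
    (h : Quaternion.normSq (orderElem a b c d) = 1) : orderElem a b c d ∈ dicyclicUnits := by
  have hsum : (a ^ 2 + a * d + d ^ 2) + (b ^ 2 + b * c + c ^ 2) = 1 := by
    exact_mod_cast (normSq_orderElem a b c d).symm.trans h
  have had : 0 ≤ a ^ 2 + a * d + d ^ 2 := sq_add_mul_add_sq_nonneg
  have hbc : 0 ≤ b ^ 2 + b * c + c ^ 2 := sq_add_mul_add_sq_nonneg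
  obtain ⟨had, hbc⟩ | ⟨had, hbc⟩ : (a ^ 2 + a * d + d ^ 2 = 1 ∧ b ^ 2 + b * c + c ^ 2 = 0) ∨
      (a ^ 2 + a * d + d ^ 2 = 0 ∧ b ^ 2 + b * c + c ^ 2 = 1) := by lia
  · obtain ⟨rfl, rfl⟩ := sq_add_mul_add_sq_eq_zero hbc
    have := sq_add_mul_add_sq_eq_one had
    simp only [Set.mem_insert_iff, Set.mem_singleton_iff, Prod.mk.injEq] at this
    rcases this with ⟨rfl, rfl⟩ | ⟨rfl, rfl⟩ | ⟨rfl, rfl⟩ | ⟨rfl, rfl⟩ | ⟨rfl, rfl⟩ | ⟨rfl, rfl⟩ <;>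
      simp [orderElem, dicyclicUnits, qi_mul_qh, ← sub_eq_add_neg, ← sub_eq_neg_add]
  · obtain ⟨rfl, rfl⟩ := sq_add_mul_add_sq_eq_zero had
    have := sq_add_mul_add_sq_eq_one hbc
    simp only [Set.mem_insert_iff, Set.mem_singleton_iff, Prod.mk.injEq] at this
    rcases this with ⟨rfl, rfl⟩ | ⟨rfl, rfl⟩ | ⟨rfl, rfl⟩ | ⟨rfl, rfl⟩ | ⟨rfl, rfl⟩ | ⟨rfl, rfl⟩ <;>
      simp [orderElem, dicyclicUnits, qi_mul_ql, ← sub_eq_add_neg, ← sub_eq_neg_add]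

theorem coe_unit_mem_dicyclicUnits {R : Subring ℍ[ℝ]}
    (hR : ∀ q ∈ R, ∃ a b c d : ℤ, q = orderElem a b c d) (u : Rˣ) :
    ((u : R) : ℍ[ℝ]) ∈ dicyclicUnits := by
  have hint (q : ℍ[ℝ]) (hq : q ∈ R) : ∃ m : ℤ, Quaternion.normSq q = m := by
    obtain ⟨a, b, c, d, rfl⟩ := hR q hq
    exact ⟨_, normSq_orderElem a b c d⟩
  obtain ⟨a, b, c, d, hu⟩ := hR _ (u : R).2
  rw [hu]
  exact orderElem_mem_dicyclicUnits (hu ▸ normSq_coe_unit_eq_one hint u)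

theorem exists_mem_closure_of_mem_dicyclicUnits {R : Subring ℍ[ℝ]} {I L : Rˣ}
    (hI : ((I : R) : ℍ[ℝ]) = qi) (hL : ((L : R) : ℍ[ℝ]) = ql) {q : ℍ[ℝ]}
    (hq : q ∈ dicyclicUnits) : ∃ u ∈ Subgroup.closure {L, I}, ((u : R) : ℍ[ℝ]) = q := by
  set H := Subgroup.closure {L, I}
  have hIH : I ∈ H := Subgroup.subset_closure (by simp)
  have hLH : L ∈ H := Subgroup.subset_closure (by simp)
  have hneg {u : Rˣ} (hu : u ∈ H) : -u ∈ H := by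
    have hneg_one : -1 = I ^ 2 := Units.ext (Subtype.ext (by simp [hI, qi_sq]))
    rw [← neg_one_mul, hneg_one]
    exact mul_mem (pow_mem hIH 2) hu
  have hhH := mul_mem hLH hIH
  have hihH := mul_mem hIH hhH
  have hilH := mul_mem hIH hLH
  rcases hq with rfl | rfl | rfl | rfl | rfl | rfl | rfl | rfl | rfl | rfl | rfl | rfl
  exacts [⟨1, one_mem H, by simp⟩, ⟨-1, hneg (one_mem H), by simp⟩,
    ⟨I, hIH, hI⟩, ⟨-I, hneg hIH, by simp [hI]⟩,
    ⟨L * I, hhH, by simp [hI, hL, ql_mul_qi]⟩, ⟨-(L * I), hneg hhH, by simp [hI, hL, ql_mul_qi]⟩,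
    ⟨L, hLH, hL⟩, ⟨-L, hneg hLH, by simp [hL]⟩,
    ⟨I * (L * I), hihH, by simp [hI, hL, ql_mul_qi]⟩,
    ⟨-(I * (L * I)), hneg hihH, by simp [hI, hL, ql_mul_qi]⟩,
    ⟨I * L, hilH, by simp [hI, hL]⟩, ⟨-(I * L), hneg hilH, by simp [hI, hL]⟩]

theorem nonempty_mulEquiv_quaternionGroup_three {R : Subring ℍ[ℝ]} {I L : Rˣ}
    (hI : ((I : R) : ℍ[ℝ]) = qi) (hL : ((L : R) : ℍ[ℝ]) = ql)
    (hgen : Subgroup.closure {L, I} = ⊤) : Nonempty (Rˣ ≃* QuaternionGroup 3) := by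
  have hsq : I ^ 2 = L ^ 3 :=
    Units.ext (Subtype.ext (by simp [hI, hL, qi_sq, ql_pow_three]))
  have hconj : SemiconjBy I L L⁻¹ :=
    eq_inv_mul_of_mul_eq (Units.ext (Subtype.ext (by simp [hI, hL, ql_mul_qi_mul_ql])))
  have horder : orderOf L = 2 * 3 := by rw [← orderOf_coe_coe_unit, hL, orderOf_ql]
  exact nonempty_mulEquiv_quaternionGroup hsq hconj horder hgen

theorem order_b_units
    (R : Subring ℍ[ℝ])
    (hR : (R : Set ℍ[ℝ]) =
      {q : ℍ[ℝ] | ∃ a b c d : ℤ, q = (a : ℍ[ℝ]) + (b : ℍ[ℝ]) * qi + (c : ℍ[ℝ]) * qh + (d : ℍ[ℝ]) * ql}) :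
    ({q : ℍ[ℝ] | ∃ u : Rˣ, ((u : R) : ℍ[ℝ]) = q} =
      ({1, -1, qi, -qi, qh, -qh, ql, -ql, qi * qh, -(qi * qh), qi * ql, -(qi * ql)} : Set ℍ[ℝ])) ∧
    Nat.card Rˣ = 12 ∧
    Nonempty (Rˣ ≃* QuaternionGroup 3) := by
  have hmem (q : ℍ[ℝ]) := Set.ext_iff.mp hR q
  have hunits (u : Rˣ) := coe_unit_mem_dicyclicUnits (fun q ↦ (hmem q).mp) u
  have hi : qi ∈ R := (hmem qi).mpr ⟨0, 1, 0, 0, by simp⟩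
  have hl : ql ∈ R := (hmem ql).mpr ⟨0, 0, 0, 1, by simp⟩
  obtain ⟨I, hI⟩ := exists_unit_coe_eq_of_pow_eq_one hi four_ne_zero
    (by rw [pow_mul qi 2 2, qi_sq, neg_one_sq])
  obtain ⟨L, hL⟩ := exists_unit_coe_eq_of_pow_eq_one hl (m := 6) (by decide)
    (orderOf_ql ▸ pow_orderOf_eq_one ql)
  have hgen {q : ℍ[ℝ]} := exists_mem_closure_of_mem_dicyclicUnits hI hL (q := q)
  have hclosure : Subgroup.closure {L, I} = ⊤ := by
    refine (Subgroup.eq_top_iff' _).mpr fun u ↦ ?_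
    obtain ⟨v, hv, hvu⟩ := hgen (hunits u)
    rwa [← Units.ext (Subtype.ext hvu)]
  obtain ⟨e⟩ := nonempty_mulEquiv_quaternionGroup_three hI hL hclosure
  refine ⟨Set.Subset.antisymm ?_ fun q hq ↦ ?_, ?_, ⟨e⟩⟩
  · rintro _ ⟨u, rfl⟩
    exact hunits u
  · obtain ⟨u, -, hu⟩ := hgen hq
    exact ⟨u, hu⟩
  · rw [Nat.card_congr e.toEquiv, Nat.card_eq_fintype_card, QuaternionGroup.card]
end

section
/- The set of fixed points in T = ℍ/𝔞 of the map (i;0) : x ↦ i·x is exactly the four-element set of 2-torsion points {0000, 1100, 1010, 0110}, i.e. {[0], [(1+i)/2], [(1+j)/2], [(i+j)/2]}. -/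
/- STATEMENT 6: The set of fixed points in T = ℍ/𝔞 of the map (i;0) : x ↦ i·x is exactly
the four-element set of 2-torsion points {0000, 1100, 1010, 0110}, i.e.
{[0], [(1+i)/2], [(1+j)/2], [(i+j)/2]}. -/

open scoped Quaternion

noncomputable def qt : ℍ[ℝ] := (1 + qi + qj + qk) / 2

/-- The Hurwitz order `𝔞 = ℤ·1 + ℤ·i + ℤ·j + ℤ·t` as an additive subgroup of `ℍ`. -/
noncomputable def hurwitz : AddSubgroup ℍ[ℝ] := AddSubgroup.closure {1, qi, qj, qt}

/-- The real torus `T = ℍ/𝔞`. -/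
noncomputable abbrev T := ℍ[ℝ] ⧸ hurwitz

/-- The class map `ℍ → T = ℍ/𝔞`. -/
noncomputable def π : ℍ[ℝ] → T := QuotientAddGroup.mk

/-! The classes fixed by `i` are those of the `x` with `(1 - i)x ∈ 𝔞`. In the basis `1, i, j, k` the
order `𝔞` consists of the `(a + bi + cj + dk)/2` whose integer coordinates all have the same parity.
Since `(1 + i)(1 - i) = 2`, multiplying by `1 + i` shows that `2x` has integer coordinates, and for
`x = (a + bi + cj + dk)/2` the condition `(1 - i)x ∈ 𝔞` becomes: `a + b + c + d` is even. Modulo `𝔞`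
only the parities of `a, b, c, d` matter, up to changing all four at once, which leaves four
classes. -/

open Submodule in
theorem mem_hurwitz_iff_exists_zsmul {q : ℍ[ℝ]} :
    q ∈ hurwitz ↔ ∃ a b c d : ℤ, a • 1 + b • qi + c • qj + d • qt = q := by
  rw [hurwitz, ← span_int_eq_addSubgroupClosure, mem_toAddSubgroup]
  simp [mem_span_insert, mem_span_singleton, add_assoc, eq_comm]

/-- The half-integral quaternion `(a + bi + cj + dk)/2`, in which both the elements of `𝔞` and the
representatives of the fixed classes are written. The last coordinate is taken along `k`, not along
`t` as in the labels `abcd` of 2-torsion points, so that membership in `𝔞` is a parity condition. -/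
@[simps]
noncomputable def halfInt (a b c d : ℤ) : ℍ[ℝ] := ⟨a / 2, b / 2, c / 2, d / 2⟩

theorem halfInt_eq_div_two (a b c d : ℤ) :
    halfInt a b c d = (a + b * qi + c * qj + d * qk) / 2 := by
  have : CharZero ℍ[ℝ] := algebraRat.charZero _
  rw [eq_div_iff two_ne_zero, mul_two]
  ext <;> simp

theorem qt_eq_halfInt : qt = halfInt 1 1 1 1 := by
  simp [halfInt_eq_div_two, qt]

theorem halfInt_add (a b c d a' b' c' d' : ℤ) :
    halfInt a b c d + halfInt a' b' c' d' = halfInt (a + a') (b + b') (c + c') (d + d') := by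
  ext <;> simp [add_div]

theorem halfInt_sub (a b c d a' b' c' d' : ℤ) :
    halfInt a b c d - halfInt a' b' c' d' = halfInt (a - a') (b - b') (c - c') (d - d') := by
  ext <;> simp [sub_div]

theorem qi_mul_halfInt (a b c d : ℤ) : qi * halfInt a b c d = halfInt (-b) a (-d) c := by
  ext <;> simp [neg_div]

theorem halfInt_inj {a b c d a' b' c' d' : ℤ} :
    halfInt a b c d = halfInt a' b' c' d' ↔ a = a' ∧ b = b' ∧ c = c' ∧ d = d' := by
  simp [Quaternion.ext_iff, div_left_inj']

theorem zsmul_add_zsmul_qt_eq_halfInt (a b c d : ℤ) :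
    a • 1 + b • qi + c • qj + d • qt = halfInt (2 * a + d) (2 * b + d) (2 * c + d) d := by
  rw [qt_eq_halfInt]
  ext <;> simp <;> ring

theorem mem_hurwitz_iff_exists_halfInt {q : ℍ[ℝ]} :
    q ∈ hurwitz ↔
      ∃ a b c d : ℤ, (2 ∣ a - d ∧ 2 ∣ b - d ∧ 2 ∣ c - d) ∧ halfInt a b c d = q := by
  simp only [mem_hurwitz_iff_exists_zsmul, zsmul_add_zsmul_qt_eq_halfInt]
  constructor
  · rintro ⟨a, b, c, d, rfl⟩
    exact ⟨2 * a + d, 2 * b + d, 2 * c + d, d, by simp, rfl⟩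
  · rintro ⟨a, b, c, d, ⟨⟨m, hm⟩, ⟨n, hn⟩, ⟨p, hp⟩⟩, rfl⟩
    exact ⟨m, n, p, d, by simp [← hm, ← hn, ← hp]⟩

theorem halfInt_mem_hurwitz_iff {a b c d : ℤ} :
    halfInt a b c d ∈ hurwitz ↔ 2 ∣ a - d ∧ 2 ∣ b - d ∧ 2 ∣ c - d := by
  simp [mem_hurwitz_iff_exists_halfInt, halfInt_inj, and_assoc]

theorem π_eq_π_iff {x y : ℍ[ℝ]} : π x = π y ↔ x - y ∈ hurwitz :=
  QuotientAddGroup.eq_iff_sub_mem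

theorem π_halfInt_eq_π_halfInt_iff {a b c d a' b' c' d' : ℤ} :
    π (halfInt a b c d) = π (halfInt a' b' c' d') ↔
      2 ∣ (a - a') - (d - d') ∧ 2 ∣ (b - b') - (d - d') ∧ 2 ∣ (c - c') - (d - d') := by
  rw [π_eq_π_iff, halfInt_sub, halfInt_mem_hurwitz_iff]

theorem π_halfInt_add_self (a b c d : ℤ) : π (halfInt a b c d) + π (halfInt a b c d) = 0 := by
  change π (halfInt a b c d + halfInt a b c d) = π 0
  rw [π_eq_π_iff, sub_zero, halfInt_add, halfInt_mem_hurwitz_iff]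
  omega

theorem π_qi_mul_halfInt_eq_iff {a b c d : ℤ} :
    π (qi * halfInt a b c d) = π (halfInt a b c d) ↔ 2 ∣ a + b + c + d := by
  rw [qi_mul_halfInt, π_halfInt_eq_π_halfInt_iff]
  omega

theorem one_add_mul_sub_mul_self {R : Type*} [Ring R] {u : R} (hu : u * u = -1) (x : R) :
    (1 + u) * (x - u * x) = x + x := by
  rw [add_mul, one_mul, mul_sub, ← mul_assoc, hu, neg_one_mul]
  abel

theorem qi_mul_qi : qi * qi = -1 := by
  ext <;> simp

theorem exists_halfInt_eq_of_π_qi_mul_eq {x : ℍ[ℝ]} (hx : π (qi * x) = π x) :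
    ∃ a b c d : ℤ, halfInt a b c d = x := by
  obtain ⟨a, b, c, d, ⟨⟨m, hm⟩, ⟨n, hn⟩, ⟨p, hp⟩⟩, hq⟩ :=
    mem_hurwitz_iff_exists_halfInt.1 (π_eq_π_iff.1 hx.symm)
  let y := halfInt (m - n) (d + m + n) p (d + p)
  have two_mul_eq : 2 * y = 2 * x := calc
    2 * y = (1 + qi) * halfInt a b c d := by
      rw [two_mul, halfInt_add, add_mul, one_mul, qi_mul_halfInt, halfInt_add, halfInt_inj]
      omega
    _ = 2 * x := by rw [hq, one_add_mul_sub_mul_self qi_mul_qi, two_mul]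
  have : CharZero ℍ[ℝ] := algebraRat.charZero _
  exact ⟨_, _, _, _, mul_left_cancel₀ two_ne_zero two_mul_eq⟩

/-- The set of classes in `T` of the half-integral quaternions with even coordinate sum, which
turns out to be the set of fixed points of multiplication by `i`. -/
def evenHalfIntClasses : Set T :=
  {x | ∃ a b c d : ℤ, 2 ∣ a + b + c + d ∧ π (halfInt a b c d) = x}

theorem evenHalfIntClasses_eq : evenHalfIntClasses =
    {π (halfInt 0 0 0 0), π (halfInt 1 1 0 0), π (halfInt 1 0 1 0), π (halfInt 0 1 1 0)} := by
  ext x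
  constructor
  · rintro ⟨a, b, c, d, h, rfl⟩
    simp only [Set.mem_insert_iff, Set.mem_singleton_iff, π_halfInt_eq_π_halfInt_iff]
    omega
  · rintro (rfl | rfl | rfl | rfl) <;> exact ⟨_, _, _, _, by norm_num, rfl⟩

theorem ncard_evenHalfIntClasses : evenHalfIntClasses.ncard = 4 := by
  rw [evenHalfIntClasses_eq, Set.ncard_insert_of_notMem, Set.ncard_insert_of_notMem,
    Set.ncard_pair] <;> simp [π_halfInt_eq_π_halfInt_iff]

theorem fixedPoints_eq_evenHalfIntClasses {f : T → T} (hf : ∀ x : ℍ[ℝ], f (π x) = π (qi * x)) :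
    {x : T | f x = x} = evenHalfIntClasses := by
  ext x
  constructor
  · obtain ⟨x, rfl⟩ : ∃ y, π y = x := QuotientAddGroup.mk_surjective x
    intro hx
    have fixed : π (qi * x) = π x := (hf x).symm.trans hx
    obtain ⟨a, b, c, d, rfl⟩ := exists_halfInt_eq_of_π_qi_mul_eq fixed
    exact ⟨a, b, c, d, π_qi_mul_halfInt_eq_iff.1 fixed, rfl⟩
  · rintro ⟨a, b, c, d, h_even, rfl⟩
    exact (hf _).trans (π_qi_mul_halfInt_eq_iff.2 h_even)

theorem fixed_points_of_i
    (f : T → T) (hf : ∀ x : ℍ[ℝ], f (π x) = π (qi * x)) :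
    {x : T | f x = x} =
      ({π 0, π ((1 + qi) / 2), π ((1 + qj) / 2), π ((qi + qj) / 2)} : Set T) ∧
    (∀ x : T, f x = x → x + x = 0) ∧
    Set.ncard {x : T | f x = x} = 4 := by
 
  have fixed_eq := fixedPoints_eq_evenHalfIntClasses hf
  refine ⟨?_, fun x hx ↦ ?_, ?_⟩
  · rw [fixed_eq, evenHalfIntClasses_eq]
    simp [halfInt_eq_div_two]
  · obtain ⟨a, b, c, d, -, rfl⟩ : x ∈ evenHalfIntClasses := fixed_eq ▸ hx
    exact π_halfInt_add_self a b c d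
  · rw [fixed_eq, ncard_evenHalfIntClasses]
end

section
/- The set of fixed points in T = ℍ/𝔞 of the map j' = (j;α) : x ↦ j·x + [(1+i)/2] is exactly the set of 2-torsion points {0011, 0101, 1001, 1111}, and the set of fixed points of k' = (k;α) : x ↦ k·x + [(1+i)/2] is exactly {0001, 1011, 0111, 1101}; in particular each of these maps fixes exactly four points, all of which are 2-torsion. -/
/- STATEMENT 7: The fixed points in T = ℍ/𝔞 of j' = (j;α) : x ↦ j·x + [(1+i)/2] are
exactly {0011, 0101, 1001, 1111}, and the fixed points of k' = (k;α) : x ↦ k·x + [(1+i)/2]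
are exactly {0001, 1011, 0111, 1101}; in particular each of these maps fixes exactly four
points, all of which are 2-torsion.  (Here abcd = [a/2 + (b/2)i + (c/2)j + (d/2)t].) -/

open scoped Quaternion

noncomputable def qα : ℍ[ℝ] := (1 + qi) / 2

/-!
Let `q` be `j` or `k`. Since `q² = -1`, we have `(1 + q)(q - 1) = -2`, so multiplying
`q x + α - x ∈ 𝔞` on the left by `1 + q` and using `(1 + q) α ∈ 𝔞` gives `2 x ∈ 𝔞`: every fixed
point is 2-torsion. Writing `x = (a + b i + c j + d t) / 2` with integers `a, b, c, d`, the fixed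
point equation becomes a parity condition: `d` is odd and `a + b + c` is odd (for `j`) or even
(for `k`).
-/

theorem add_self_mem_of_mul_add_sub_mem {R : Type*} [Ring R] {A : AddSubgroup R} {q r x : R}
    (hq : q * q = -1) (hA : ∀ a ∈ A, q * a ∈ A) (hr : r + q * r ∈ A)
    (hx : q * x + r - x ∈ A) : x + x ∈ A := by
  have key : x + x = r + q * r - (q * x + r - x + q * (q * x + r - x)) := by
    simp only [mul_add, mul_sub, ← mul_assoc, hq, neg_one_mul]
    abel
  rw [key]
  exact A.sub_mem hr (A.add_mem hx (hA _ hx))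

theorem add_self_eq_zero_of_affine_fixed {R : Type*} [Ring R] {A : AddSubgroup R} {q r : R}
    {f : R ⧸ A → R ⧸ A} (hf : ∀ x : R, f x = (q * x + r : R)) (hq : q * q = -1)
    (hA : ∀ a ∈ A, q * a ∈ A) (hr : r + q * r ∈ A) {y : R ⧸ A} (hy : f y = y) : y + y = 0 := by
  obtain ⟨x, rfl⟩ := QuotientAddGroup.mk_surjective y
  rw [hf, QuotientAddGroup.eq_iff_sub_mem] at hy
  exact (QuotientAddGroup.eq_zero_iff (x + x)).2
    (add_self_mem_of_mul_add_sub_mem hq hA hr hy)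

instance instCharZeroQuaternion {R : Type*} [CommRing R] [CharZero R] : CharZero ℍ[R] :=
  charZero_of_injective_algebraMap Quaternion.algebraMap_injective

@[simp] theorem qi_re : qi.re = 0 := rfl
@[simp] theorem qi_imI : qi.imI = 1 := rfl
@[simp] theorem qi_imJ : qi.imJ = 0 := rfl
@[simp] theorem qi_imK : qi.imK = 0 := rfl

@[simp] theorem qj_re : qj.re = 0 := rfl
@[simp] theorem qj_imI : qj.imI = 0 := rfl
@[simp] theorem qj_imJ : qj.imJ = 1 := rfl
@[simp] theorem qj_imK : qj.imK = 0 := rfl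

@[simp] theorem qk_re : qk.re = 0 := rfl
@[simp] theorem qk_imI : qk.imI = 0 := rfl
@[simp] theorem qk_imJ : qk.imJ = 0 := rfl
@[simp] theorem qk_imK : qk.imK = 1 := rfl

theorem qj_mul_self : qj * qj = -1 := by
  ext <;> simp

theorem qk_mul_self : qk * qk = -1 := by
  ext <;> simp

theorem qt_eq_smul : qt = (2⁻¹ : ℝ) • (1 + qi + qj + qk) := by
  rw [qt, div_eq_iff two_ne_zero, mul_two, ← add_smul]
  norm_num

@[simp] theorem qt_re : qt.re = 2⁻¹ := by simp [qt_eq_smul]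
@[simp] theorem qt_imI : qt.imI = 2⁻¹ := by simp [qt_eq_smul]
@[simp] theorem qt_imJ : qt.imJ = 2⁻¹ := by simp [qt_eq_smul]
@[simp] theorem qt_imK : qt.imK = 2⁻¹ := by simp [qt_eq_smul]

/-- The integral combination `a + b i + c j + d t` of the basis `1, i, j, t` of the Hurwitz
order. -/
noncomputable def hurwitzComb (a b c d : ℤ) : ℍ[ℝ] := a + b * qi + c * qj + d * qt

@[simp] theorem hurwitzComb_re (a b c d : ℤ) : (hurwitzComb a b c d).re = a + d / 2 := by
  simp [hurwitzComb, div_eq_mul_inv]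

@[simp] theorem hurwitzComb_imI (a b c d : ℤ) : (hurwitzComb a b c d).imI = b + d / 2 := by
  simp [hurwitzComb, div_eq_mul_inv]

@[simp] theorem hurwitzComb_imJ (a b c d : ℤ) : (hurwitzComb a b c d).imJ = c + d / 2 := by
  simp [hurwitzComb, div_eq_mul_inv]

@[simp] theorem hurwitzComb_imK (a b c d : ℤ) : (hurwitzComb a b c d).imK = d / 2 := by
  simp [hurwitzComb, div_eq_mul_inv]

theorem hurwitzComb_inj {a b c d a' b' c' d' : ℤ} :
    hurwitzComb a b c d = hurwitzComb a' b' c' d' ↔ a = a' ∧ b = b' ∧ c = c' ∧ d = d' := by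
  refine ⟨fun h => ?_, by rintro ⟨rfl, rfl, rfl, rfl⟩; rfl⟩
  simp only [Quaternion.ext_iff, hurwitzComb_re, hurwitzComb_imI, hurwitzComb_imJ,
    hurwitzComb_imK] at h
  obtain ⟨h₁, h₂, h₃, h₄⟩ := h
  refine ⟨?_, ?_, ?_, ?_⟩ <;> rify <;> linarith

theorem hurwitzComb_sub (a b c d a' b' c' d' : ℤ) :
    hurwitzComb a b c d - hurwitzComb a' b' c' d' =
      hurwitzComb (a - a') (b - b') (c - c') (d - d') := by
  simp only [hurwitzComb, Int.cast_sub, sub_mul]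
  abel

theorem hurwitzComb_add (a b c d a' b' c' d' : ℤ) :
    hurwitzComb a b c d + hurwitzComb a' b' c' d' =
      hurwitzComb (a + a') (b + b') (c + c') (d + d') := by
  simp only [hurwitzComb, Int.cast_add, add_mul]
  abel

theorem qj_mul_hurwitzComb (a b c d : ℤ) :
    qj * hurwitzComb a b c d = hurwitzComb (b - c) (b + d) (a + b + d) (-2 * b - d) := by
  ext <;> simp <;> ring

theorem qk_mul_hurwitzComb (a b c d : ℤ) :
    qk * hurwitzComb a b c d = hurwitzComb (-a - d) (-a - c - d) (b - a) (2 * a + d) := by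
  ext <;> simp <;> ring

theorem qα_eq_hurwitzComb_div_two : qα = hurwitzComb 1 1 0 0 / 2 := by
  simp [qα, hurwitzComb]

theorem mem_hurwitz_iff {x : ℍ[ℝ]} :
    x ∈ hurwitz ↔ ∃ a b c d : ℤ, hurwitzComb a b c d = x := by
  rw [hurwitz, ← Submodule.span_int_eq_addSubgroupClosure, Submodule.mem_toAddSubgroup]
  simp [Submodule.mem_span_insert, Submodule.mem_span_singleton, hurwitzComb, add_assoc,
    eq_comm (a := x)]

theorem hurwitzComb_mem_hurwitz (a b c d : ℤ) : hurwitzComb a b c d ∈ hurwitz :=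
  mem_hurwitz_iff.2 ⟨a, b, c, d, rfl⟩

theorem hurwitzComb_div_two_mem_hurwitz_iff {a b c d : ℤ} :
    hurwitzComb a b c d / 2 ∈ hurwitz ↔ Even a ∧ Even b ∧ Even c ∧ Even d := by
  simp only [mem_hurwitz_iff, eq_div_iff (two_ne_zero (α := ℍ[ℝ])), mul_two, hurwitzComb_add,
    hurwitzComb_inj, Even, exists_and_left, exists_and_right, eq_comm]

theorem qj_mul_mem_hurwitz {x : ℍ[ℝ]} (hx : x ∈ hurwitz) : qj * x ∈ hurwitz := by
  obtain ⟨a, b, c, d, rfl⟩ := mem_hurwitz_iff.1 hx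
  rw [qj_mul_hurwitzComb]
  exact hurwitzComb_mem_hurwitz _ _ _ _

theorem qk_mul_mem_hurwitz {x : ℍ[ℝ]} (hx : x ∈ hurwitz) : qk * x ∈ hurwitz := by
  obtain ⟨a, b, c, d, rfl⟩ := mem_hurwitz_iff.1 hx
  rw [qk_mul_hurwitzComb]
  exact hurwitzComb_mem_hurwitz _ _ _ _

theorem qα_add_qj_mul_qα_mem_hurwitz : qα + qj * qα ∈ hurwitz := by
  rw [qα_eq_hurwitzComb_div_two, ← mul_div_assoc, qj_mul_hurwitzComb, ← add_div,
    hurwitzComb_add, hurwitzComb_div_two_mem_hurwitz_iff]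
  decide

theorem qα_add_qk_mul_qα_mem_hurwitz : qα + qk * qα ∈ hurwitz := by
  rw [qα_eq_hurwitzComb_div_two, ← mul_div_assoc, qk_mul_hurwitzComb, ← add_div,
    hurwitzComb_add, hurwitzComb_div_two_mem_hurwitz_iff]
  decide

theorem π_surjective : Function.Surjective π :=
  QuotientAddGroup.mk_surjective

theorem π_add_self_eq_zero_iff {x : ℍ[ℝ]} : π x + π x = 0 ↔ x + x ∈ hurwitz :=
  QuotientAddGroup.eq_zero_iff (x + x)

/-- The point `abcd = [a/2 + (b/2) i + (c/2) j + (d/2) t]` of `T`, for arbitrary integers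
`a, b, c, d`; it depends only on their parities. -/
noncomputable def torsionPoint (a b c d : ℤ) : T := π (hurwitzComb a b c d / 2)

theorem torsionPoint_eq_iff {a b c d a' b' c' d' : ℤ} :
    torsionPoint a b c d = torsionPoint a' b' c' d' ↔
      Even (a - a') ∧ Even (b - b') ∧ Even (c - c') ∧ Even (d - d') := by
  rw [torsionPoint, torsionPoint, π_eq_π_iff, ← sub_div, hurwitzComb_sub,
    hurwitzComb_div_two_mem_hurwitz_iff]

theorem exists_torsionPoint_eq_of_add_self_eq_zero {y : T} (hy : y + y = 0) :
    ∃ a b c d : ℤ, torsionPoint a b c d = y := by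
  obtain ⟨x, rfl⟩ := π_surjective y
  obtain ⟨a, b, c, d, h⟩ := mem_hurwitz_iff.1 (π_add_self_eq_zero_iff.1 hy)
  exact ⟨a, b, c, d, by rw [torsionPoint, h, add_self_div_two]⟩

section AffineMaps

variable {f : T → T}

theorem add_self_eq_zero_of_qj_affine_fixed (hf : ∀ x, f (π x) = π (qj * x + qα)) {y : T}
    (hy : f y = y) : y + y = 0 :=
  add_self_eq_zero_of_affine_fixed hf qj_mul_self (fun _ => qj_mul_mem_hurwitz)
    qα_add_qj_mul_qα_mem_hurwitz hy

theorem add_self_eq_zero_of_qk_affine_fixed (hf : ∀ x, f (π x) = π (qk * x + qα)) {y : T}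
    (hy : f y = y) : y + y = 0 :=
  add_self_eq_zero_of_affine_fixed hf qk_mul_self (fun _ => qk_mul_mem_hurwitz)
    qα_add_qk_mul_qα_mem_hurwitz hy

theorem qj_affine_torsionPoint (hf : ∀ x, f (π x) = π (qj * x + qα)) (a b c d : ℤ) :
    f (torsionPoint a b c d) =
      torsionPoint (b - c + 1) (b + d + 1) (a + b + d) (-2 * b - d) := by
  rw [torsionPoint, hf, ← mul_div_assoc, qj_mul_hurwitzComb, qα_eq_hurwitzComb_div_two,
    ← add_div, hurwitzComb_add, add_zero, add_zero, torsionPoint]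

theorem qk_affine_torsionPoint (hf : ∀ x, f (π x) = π (qk * x + qα)) (a b c d : ℤ) :
    f (torsionPoint a b c d) =
      torsionPoint (-a - d + 1) (-a - c - d + 1) (b - a) (2 * a + d) := by
  rw [torsionPoint, hf, ← mul_div_assoc, qk_mul_hurwitzComb, qα_eq_hurwitzComb_div_two,
    ← add_div, hurwitzComb_add, add_zero, add_zero, torsionPoint]

theorem qj_affine_torsionPoint_eq_self_iff (hf : ∀ x, f (π x) = π (qj * x + qα))
    {a b c d : ℤ} :
    f (torsionPoint a b c d) = torsionPoint a b c d ↔ Odd (a + b + c) ∧ Odd d := by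
  rw [qj_affine_torsionPoint hf, torsionPoint_eq_iff]
  grind

theorem qk_affine_torsionPoint_eq_self_iff (hf : ∀ x, f (π x) = π (qk * x + qα))
    {a b c d : ℤ} :
    f (torsionPoint a b c d) = torsionPoint a b c d ↔ Even (a + b + c) ∧ Odd d := by
  rw [qk_affine_torsionPoint hf, torsionPoint_eq_iff]
  grind

theorem fixedPoints_qj_affine (hf : ∀ x, f (π x) = π (qj * x + qα)) :
    Function.fixedPoints f = {torsionPoint 0 0 1 1, torsionPoint 0 1 0 1, torsionPoint 1 0 0 1,
      torsionPoint 1 1 1 1} := by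
  ext y
  simp only [Function.mem_fixedPoints_iff, Set.mem_insert_iff, Set.mem_singleton_iff]
  constructor
  · intro hy
    obtain ⟨a, b, c, d, rfl⟩ := exists_torsionPoint_eq_of_add_self_eq_zero
      (add_self_eq_zero_of_qj_affine_fixed hf hy)
    rw [qj_affine_torsionPoint_eq_self_iff hf] at hy
    simp only [torsionPoint_eq_iff]
    grind
  · rintro (rfl | rfl | rfl | rfl) <;>
      exact (qj_affine_torsionPoint_eq_self_iff hf).2 (by decide)

theorem fixedPoints_qk_affine (hf : ∀ x, f (π x) = π (qk * x + qα)) :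
    Function.fixedPoints f = {torsionPoint 0 0 0 1, torsionPoint 1 0 1 1, torsionPoint 0 1 1 1,
      torsionPoint 1 1 0 1} := by
  ext y
  simp only [Function.mem_fixedPoints_iff, Set.mem_insert_iff, Set.mem_singleton_iff]
  constructor
  · intro hy
    obtain ⟨a, b, c, d, rfl⟩ := exists_torsionPoint_eq_of_add_self_eq_zero
      (add_self_eq_zero_of_qk_affine_fixed hf hy)
    rw [qk_affine_torsionPoint_eq_self_iff hf] at hy
    simp only [torsionPoint_eq_iff]
    grind
  · rintro (rfl | rfl | rfl | rfl) <;>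
      exact (qk_affine_torsionPoint_eq_self_iff hf).2 (by decide)

theorem ncard_fixedPoints_qj_affine (hf : ∀ x, f (π x) = π (qj * x + qα)) :
    (Function.fixedPoints f).ncard = 4 := by
  rw [fixedPoints_qj_affine hf, Set.ncard_insert_of_notMem, Set.ncard_insert_of_notMem,
    Set.ncard_pair] <;> simp [torsionPoint_eq_iff]

theorem ncard_fixedPoints_qk_affine (hf : ∀ x, f (π x) = π (qk * x + qα)) :
    (Function.fixedPoints f).ncard = 4 := by
  rw [fixedPoints_qk_affine hf, Set.ncard_insert_of_notMem, Set.ncard_insert_of_notMem,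
    Set.ncard_pair] <;> simp [torsionPoint_eq_iff]

end AffineMaps

theorem fixed_points_of_j'_and_k'
    (fj fk : T → T)
    (hfj : ∀ x : ℍ[ℝ], fj (π x) = π (qj * x + qα))
    (hfk : ∀ x : ℍ[ℝ], fk (π x) = π (qk * x + qα)) :
    ({x : T | fj x = x} =
      ({π ((qj + qt) / 2), π ((qi + qt) / 2), π ((1 + qt) / 2),
        π ((1 + qi + qj + qt) / 2)} : Set T)) ∧
    ({x : T | fk x = x} =
      ({π (qt / 2), π ((1 + qj + qt) / 2), π ((qi + qj + qt) / 2),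
        π ((1 + qi + qt) / 2)} : Set T)) ∧
    Set.ncard {x : T | fj x = x} = 4 ∧
    Set.ncard {x : T | fk x = x} = 4 ∧
    (∀ x : T, (fj x = x ∨ fk x = x) → x + x = 0) := by
  refine ⟨?_, ?_, ncard_fixedPoints_qj_affine hfj, ncard_fixedPoints_qk_affine hfk, ?_⟩
  · simpa [Function.fixedPoints, Function.IsFixedPt, torsionPoint, hurwitzComb] using
      fixedPoints_qj_affine hfj
  · simpa [Function.fixedPoints, Function.IsFixedPt, torsionPoint, hurwitzComb] using
      fixedPoints_qk_affine hfk
  · rintro x (hx | hx)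
    · exact add_self_eq_zero_of_qj_affine_fixed hfj hx
    · exact add_self_eq_zero_of_qk_affine_fixed hfk hx
end

section
/- Let w be the square of the affine map (t; s/2) : x ↦ t·x + [s/2] of T = ℍ/𝔞, where s = (1+i−j+k)/2. Then w has order exactly 3 (w∘w∘w = id and w ≠ id), w fixes exactly one of the sixteen 2-torsion points of T, and this fixed 2-torsion point is fixed by none of the three maps (i;0), j' = (j;α), k' = (k;α). -/
/- STATEMENT 10: Let w be the square of (t; s/2) : x ↦ t·x + [s/2] on T = ℍ/𝔞, where
s = (1+i−j+k)/2.  Then w has order exactly 3, w fixes exactly one of the sixteen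
2-torsion points of T, and this fixed 2-torsion point is fixed by none of the maps
(i;0), j' = (j;α), k' = (k;α). -/

open scoped Quaternion

noncomputable def qs : ℍ[ℝ] := (1 + qi - qj + qk) / 2

/-!
In `ℍ` one has `t * i + s = i`, so `x ↦ t * x + s / 2` is left multiplication by `t` conjugated by
the translation by `i / 2`. As `t ^ 2 = t - 1` and `t ^ 6 = 1`, its square `w` has `w ^ 3 = 1`.
If `[i / 2 + y]` is a 2-torsion point fixed by `w`, then `2 * y` and `(t - 2) * y` lie in `𝔞`,
hence so do `t * y` and `y = t * y - t * (t * y)`: the point is `[i / 2]`. The remaining maps move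
`[i / 2]` by the class of a quaternion of norm `1 / 2`, whereas elements of `𝔞` have integral norm.
-/

section TorsionOfQuotient

variable {E : Type*} [AddCommGroup E] [Module ℚ E] (L : AddSubgroup E) (n : ℕ)

/-- The homomorphism `u ↦ [u / n]` from a subgroup `L` of a rational vector space `E` to `E ⧸ L`;
for `n ≠ 0` it presents the `n`-torsion of `E ⧸ L` as `L / nL`. -/
noncomputable def divClass : L →ₗ[ℤ] E ⧸ L :=
  ((QuotientAddGroup.mk' L).comp
    ((DistribSMul.toAddMonoidHom E (n : ℚ)⁻¹).comp L.subtype)).toIntLinearMap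

theorem divClass_apply (u : L) : divClass L n u = (((n : ℚ)⁻¹ • (u : E) : E) : E ⧸ L) := rfl

variable [NeZero n]

theorem ker_divClass : LinearMap.ker (divClass L n) = LinearMap.range (LinearMap.lsmul ℤ L n) := by
  ext u
  rw [LinearMap.mem_ker, divClass_apply, QuotientAddGroup.eq_zero_iff, LinearMap.mem_range]
  have hn : (n : ℚ) ≠ 0 := NeZero.ne _
  constructor
  · intro hu
    refine ⟨⟨_, hu⟩, Subtype.ext ?_⟩
    simp [← Nat.cast_smul_eq_nsmul ℚ, smul_inv_smul₀ hn]
  · rintro ⟨v, rfl⟩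
    simp [← Nat.cast_smul_eq_nsmul ℚ, inv_smul_smul₀ hn]

theorem coe_range_divClass : (LinearMap.range (divClass L n) : Set (E ⧸ L)) = {x | n • x = 0} := by
  have hn : (n : ℚ) ≠ 0 := NeZero.ne _
  ext x
  obtain ⟨q, rfl⟩ := QuotientAddGroup.mk_surjective x
  rw [Set.mem_ofPred_eq, ← QuotientAddGroup.mk_nsmul, QuotientAddGroup.eq_zero_iff]
  constructor
  · rintro ⟨u, hu⟩
    have hdiff : (n : ℚ)⁻¹ • (u : E) - q ∈ L := QuotientAddGroup.eq_iff_sub_mem.1 hu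
    have hmem : (u : E) - n • ((n : ℚ)⁻¹ • (u : E) - q) ∈ L :=
      L.sub_mem u.2 (L.nsmul_mem hdiff n)
    simpa [← Nat.cast_smul_eq_nsmul ℚ, smul_sub, smul_inv_smul₀ hn] using hmem
  · intro hq
    refine ⟨⟨n • q, hq⟩, ?_⟩
    simp [divClass_apply, ← Nat.cast_smul_eq_nsmul ℚ, inv_smul_smul₀ hn]

theorem ncard_torsion_quotient [Module.Free ℤ L] [Module.Finite ℤ L] :
    {x : E ⧸ L | n • x = 0}.ncard = n ^ Module.finrank ℤ L := by
  rw [← coe_range_divClass, ← ModN.natCard_eq L n, ModN, ← ker_divClass]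
  exact (Nat.card_congr (divClass L n).quotKerEquivRange.toEquiv).symm

end TorsionOfQuotient

theorem div_two_eq_smul (q : ℍ[ℝ]) : q / 2 = (2⁻¹ : ℝ) • q := by
  rw [div_eq_mul_inv, ← Quaternion.mul_coe_eq_smul, Quaternion.coe_inv]
  rfl

@[simp] theorem qi_coords : qi.re = 0 ∧ qi.imI = 1 ∧ qi.imJ = 0 ∧ qi.imK = 0 :=
  ⟨rfl, rfl, rfl, rfl⟩

@[simp] theorem qj_coords : qj.re = 0 ∧ qj.imI = 0 ∧ qj.imJ = 1 ∧ qj.imK = 0 :=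
  ⟨rfl, rfl, rfl, rfl⟩

@[simp] theorem qk_coords : qk.re = 0 ∧ qk.imI = 0 ∧ qk.imJ = 0 ∧ qk.imK = 1 :=
  ⟨rfl, rfl, rfl, rfl⟩

@[simp] theorem qt_coords : qt.re = 2⁻¹ ∧ qt.imI = 2⁻¹ ∧ qt.imJ = 2⁻¹ ∧ qt.imK = 2⁻¹ := by
  simp [qt, div_two_eq_smul]

theorem qt_sq : qt ^ 2 = qt - 1 := by
  rw [sq]
  ext <;> norm_num

theorem qt_pow_six : qt ^ 6 = 1 := by
  have hcube : qt ^ 3 = -1 := by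
    rw [pow_succ, qt_sq, sub_mul, ← sq, qt_sq]
    noncomm_ring
  rw [pow_mul qt 3 2, hcube, neg_one_sq]

theorem qt_mul_qi_add_qs : qt * qi + qs = qi := by
  ext <;> norm_num [qs, div_two_eq_smul]

/-- The defining `ℤ`-basis `1, i, j, t` of the Hurwitz order, as vectors of `ℍ`. -/
noncomputable def hurwitzGen : Fin 4 → ℍ[ℝ] := ![1, qi, qj, qt]

theorem sum_smul_hurwitzGen (g : Fin 4 → ℤ) :
    ∑ m, g m • hurwitzGen m = g 0 • 1 + g 1 • qi + g 2 • qj + g 3 • qt := by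
  simp [hurwitzGen, Fin.sum_univ_four]

theorem span_hurwitzGen :
    Submodule.span ℤ (Set.range hurwitzGen) = AddSubgroup.toIntSubmodule hurwitz := by
  rw [hurwitz, AddSubgroup.toIntSubmodule_closure]
  simp only [hurwitzGen, Matrix.range_cons, Matrix.range_empty, Set.union_empty,
    Set.singleton_union]

theorem linearIndependent_hurwitzGen : LinearIndependent ℤ hurwitzGen := by
  rw [Fintype.linearIndependent_iff]
  intro g hg
  rw [sum_smul_hurwitzGen] at hg
  obtain ⟨hre, hi, hj, hk⟩ := Quaternion.ext_iff.1 hg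
  have h₃ : g 3 = 0 := by simpa using hk
  have h₀ : g 0 = 0 := by simpa [h₃] using hre
  have h₁ : g 1 = 0 := by simpa [h₃] using hi
  have h₂ : g 2 = 0 := by simpa [h₃] using hj
  simp [Fin.forall_fin_succ, h₀, h₁, h₂, h₃]

/-- The basis `1, i, j, t` of the Hurwitz order. -/
noncomputable def hurwitzBasis : Module.Basis (Fin 4) ℤ hurwitz :=
  (Module.Basis.span linearIndependent_hurwitzGen).map (LinearEquiv.ofEq _ _ span_hurwitzGen)

instance : Module.Free ℤ hurwitz := .of_basis hurwitzBasis

instance : Module.Finite ℤ hurwitz := .of_basis hurwitzBasis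

theorem finrank_hurwitz : Module.finrank ℤ hurwitz = 4 := by
  rw [Module.finrank_eq_card_basis hurwitzBasis, Fintype.card_fin]

theorem mem_hurwitz_iff_s10 {q : ℍ[ℝ]} :
    q ∈ hurwitz ↔ ∃ g : Fin 4 → ℤ, g 0 • 1 + g 1 • qi + g 2 • qj + g 3 • qt = q := by
  simp_rw [← sum_smul_hurwitzGen, ← Submodule.mem_span_range_iff_exists_fun, span_hurwitzGen]
  rfl

theorem qi_mem_hurwitz : qi ∈ hurwitz := AddSubgroup.subset_closure (by simp)

theorem qt_mem_hurwitz : qt ∈ hurwitz := AddSubgroup.subset_closure (by simp)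

theorem mul_mem_hurwitz {x y : ℍ[ℝ]} (hx : x ∈ hurwitz) (hy : y ∈ hurwitz) : x * y ∈ hurwitz := by
  obtain ⟨g, rfl⟩ := mem_hurwitz_iff_s10.1 hx
  obtain ⟨h, rfl⟩ := mem_hurwitz_iff_s10.1 hy
  -- `m` is the coefficient of `i * j = k = 2 * t - 1 - i - j` in the expanded product.
  set m := g 1 * h 2 - g 2 * h 1 with hm
  refine mem_hurwitz_iff_s10.2
    ⟨![g 0 * h 0 - g 1 * h 1 - g 2 * h 2 - g 3 * h 3 - g 1 * h 3 - g 3 * h 2 - m,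
      g 0 * h 1 + g 1 * h 0 + g 2 * h 3 + g 3 * h 1 - g 3 * h 2 - m,
      g 0 * h 2 + g 2 * h 0 - g 1 * h 3 + g 2 * h 3 + g 3 * h 1 - m,
      g 0 * h 3 + g 3 * h 0 + g 1 * h 3 - g 2 * h 3 - g 3 * h 1 + g 3 * h 2 + g 3 * h 3
        + (m + m)], ?_⟩
  ext <;> simp [hm] <;> ring

theorem exists_int_normSq_of_mem_hurwitz {x : ℍ[ℝ]} (hx : x ∈ hurwitz) :
    ∃ n : ℤ, Quaternion.normSq x = n := by
  obtain ⟨g, rfl⟩ := mem_hurwitz_iff_s10.1 hx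
  refine ⟨g 0 ^ 2 + g 1 ^ 2 + g 2 ^ 2 + g 3 ^ 2 + (g 0 + g 1 + g 2) * g 3, ?_⟩
  simp only [zsmul_eq_mul, mul_one, Quaternion.normSq_def', Quaternion.re_add,
    Quaternion.re_intCast, Quaternion.re_mul, qi_coords, mul_zero, Quaternion.imI_intCast, sub_self,
    Quaternion.imJ_intCast, Quaternion.imK_intCast, add_zero, qj_coords, qt_coords, zero_mul,
    sub_zero, Quaternion.imI_add, Quaternion.imI_mul, zero_add, Quaternion.imJ_add,
    Quaternion.imJ_mul, Quaternion.imK_add, Quaternion.imK_mul, Int.cast_add, Int.cast_pow,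
    Int.cast_mul]
  ring

theorem notMem_hurwitz_of_normSq_mem_Ioo {x : ℍ[ℝ]} (hx : Quaternion.normSq x ∈ Set.Ioo 0 1) :
    x ∉ hurwitz := by
  intro hmem
  obtain ⟨n, hn⟩ := exists_int_normSq_of_mem_hurwitz hmem
  rw [hn, Set.mem_Ioo] at hx
  norm_cast at hx
  omega

theorem ncard_two_torsion : {x : T | x + x = 0}.ncard = 16 := by
  simpa [two_nsmul, finrank_hurwitz] using ncard_torsion_quotient hurwitz 2

theorem π_ne_π_of_normSq_sub_mem_Ioo {x y : ℍ[ℝ]}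
    (h : Quaternion.normSq (x - y) ∈ Set.Ioo 0 1) : π x ≠ π y :=
  fun hxy => notMem_hurwitz_of_normSq_mem_Ioo h (π_eq_π_iff.1 hxy)

theorem exists_π_half_qi_add (x : T) : ∃ y, π (qi / 2 + y) = x := by
  obtain ⟨q, rfl⟩ := QuotientAddGroup.mk_surjective x
  exact ⟨q - qi / 2, congrArg π (add_sub_cancel (qi / 2) q)⟩

theorem π_half_qi_add_add_self_eq_zero_iff {y : ℍ[ℝ]} :
    π (qi / 2 + y) + π (qi / 2 + y) = 0 ↔ y + y ∈ hurwitz := by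
  have hadd : qi / 2 + y + (qi / 2 + y) = qi + (y + y) := by
    rw [div_two_eq_smul]
    module
  change π (qi / 2 + y + (qi / 2 + y)) = π 0 ↔ _
  rw [π_eq_π_iff, sub_zero, hadd, add_mem_cancel_left qi_mem_hurwitz]

theorem add_self_mem_and_qt_sq_mul_sub_mem_hurwitz_iff {y : ℍ[ℝ]} :
    y + y ∈ hurwitz ∧ qt ^ 2 * y - y ∈ hurwitz ↔ y ∈ hurwitz := by
  constructor
  · rintro ⟨htwo, hfix⟩
    have hty : qt * y ∈ hurwitz := by
      have heq : qt * y = (qt ^ 2 * y - y) + (y + y) := by rw [qt_sq]; noncomm_ring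
      exact heq ▸ add_mem hfix htwo
    have heq : y = qt * y - qt * (qt * y) := by
      rw [← mul_assoc, ← sq, qt_sq]
      noncomm_ring
    exact heq ▸ sub_mem hty (mul_mem_hurwitz qt_mem_hurwitz hty)
  · intro hy
    have ht_sq : qt ^ 2 ∈ hurwitz := sq qt ▸ mul_mem_hurwitz qt_mem_hurwitz qt_mem_hurwitz
    exact ⟨add_mem hy hy, sub_mem (mul_mem_hurwitz ht_sq hy) hy⟩

section AffineMap

variable {f : T → T} (hf : ∀ x : ℍ[ℝ], f (π x) = π (qt * x + qs / 2))
include hf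

theorem map_π_half_qi_add (y : ℍ[ℝ]) : f (π (qi / 2 + y)) = π (qi / 2 + qt * y) := by
  rw [hf, mul_add, add_right_comm, ← mul_div_assoc, ← add_div, qt_mul_qi_add_qs]

theorem iterate_π_half_qi_add (n : ℕ) (y : ℍ[ℝ]) :
    f^[n] (π (qi / 2 + y)) = π (qi / 2 + qt ^ n * y) := by
  induction n with
  | zero => simp
  | succ n ih =>
    rw [Function.iterate_succ_apply', ih, map_π_half_qi_add hf, ← mul_assoc, ← pow_succ']

theorem iterate_six_eq_id : f^[6] = id := by
  funext x
  obtain ⟨y, rfl⟩ := exists_π_half_qi_add x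
  rw [iterate_π_half_qi_add hf, qt_pow_six, one_mul, id]

theorem two_torsion_and_iterate_two_fixed_iff {x : T} :
    x + x = 0 ∧ f^[2] x = x ↔ x = π (qi / 2) := by
  obtain ⟨y, rfl⟩ := exists_π_half_qi_add x
  rw [π_half_qi_add_add_self_eq_zero_iff, iterate_π_half_qi_add hf, π_eq_π_iff, π_eq_π_iff,
    add_sub_add_left_eq_sub, add_sub_cancel_left, add_self_mem_and_qt_sq_mul_sub_mem_hurwitz_iff]

end AffineMap

theorem π_half_qi_ne_zero : π (qi / 2) ≠ 0 := by
  change π (qi / 2) ≠ π 0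
  apply π_ne_π_of_normSq_sub_mem_Ioo
  norm_num [Quaternion.normSq_def', div_two_eq_smul]

theorem π_qi_mul_half_qi_ne : π (qi * (qi / 2)) ≠ π (qi / 2) := by
  apply π_ne_π_of_normSq_sub_mem_Ioo
  norm_num [Quaternion.normSq_def', div_two_eq_smul]

theorem π_qj_mul_half_qi_add_qα_ne : π (qj * (qi / 2) + qα) ≠ π (qi / 2) := by
  apply π_ne_π_of_normSq_sub_mem_Ioo
  norm_num [Quaternion.normSq_def', div_two_eq_smul, qα]

theorem π_qk_mul_half_qi_add_qα_ne : π (qk * (qi / 2) + qα) ≠ π (qi / 2) := by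
  apply π_ne_π_of_normSq_sub_mem_Ioo
  norm_num [Quaternion.normSq_def', div_two_eq_smul, qα]

theorem order_three_automorphism_fixes_one_two_torsion_point
    (ft fi fj fk : T → T)
    (hft : ∀ x : ℍ[ℝ], ft (π x) = π (qt * x + qs / 2))
    (hfi : ∀ x : ℍ[ℝ], fi (π x) = π (qi * x))
    (hfj : ∀ x : ℍ[ℝ], fj (π x) = π (qj * x + qα))
    (hfk : ∀ x : ℍ[ℝ], fk (π x) = π (qk * x + qα)) :
    -- T has exactly sixteen 2-torsion points
    Set.ncard {x : T | x + x = 0} = 16 ∧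
    -- w = (t;s/2)² has order exactly 3
    (ft ∘ ft) ∘ (ft ∘ ft) ∘ (ft ∘ ft) = id ∧
    ft ∘ ft ≠ id ∧
    -- w fixes exactly one 2-torsion point
    (∃! x : T, x + x = 0 ∧ (ft ∘ ft) x = x) ∧
    -- that point is fixed by none of (i;0), j', k'
    (∀ x : T, x + x = 0 → (ft ∘ ft) x = x →
      fi x ≠ x ∧ fj x ≠ x ∧ fk x ≠ x) := by
  have hfixed : ∀ {x : T}, x + x = 0 ∧ (ft ∘ ft) x = x ↔ x = π (qi / 2) :=
    two_torsion_and_iterate_two_fixed_iff hft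
  refine ⟨ncard_two_torsion, iterate_six_eq_id hft, fun hid => ?_,
    ⟨π (qi / 2), hfixed.2 rfl, fun _ => hfixed.1⟩, fun x hx hwx => ?_⟩
  · have hzero : 0 = π (qi / 2) := hfixed.1 ⟨add_zero 0, congrFun hid 0⟩
    exact π_half_qi_ne_zero hzero.symm
  · obtain rfl := hfixed.1 ⟨hx, hwx⟩
    rw [hfi, hfj, hfk]
    exact ⟨π_qi_mul_half_qi_ne, π_qj_mul_half_qi_add_qα_ne, π_qk_mul_half_qi_add_qα_ne⟩
end

section
/- Every element x of the lattice K = K_{Q̂₈} = F + ℤδ₁ + ℤδ₂ with ⟨x,x⟩ = −2 already lies in F = F_{Q̂₈}; that is, the roots of K_{Q̂₈} coincide with the roots of the root lattice A₁ ⊕ A₃^{⊕6}. -/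
/- STATEMENT 12: Every element x of K = K_{Q̂₈} = F + ℤδ₁ + ℤδ₂ with ⟨x,x⟩ = −2 already
lies in F = F_{Q̂₈}; that is, the roots of K_{Q̂₈} coincide with the roots of the root
lattice A₁ ⊕ A₃^{⊕6}. -/

open Finset

/-- Gram matrix of the (negative definite) root lattice `A₁ ⊕ A₃^{⊕6}` in the basis
`C₀ = e 0` and `C_r^s = e (3(r-1)+s)` for `1 ≤ r ≤ 6`, `1 ≤ s ≤ 3`. -/
def gramQ8 : Fin 19 → Fin 19 → ℚ := fun p q =>
  if p = q then -2
  else if (p.1 = q.1 + 1 ∨ q.1 = p.1 + 1) ∧ 1 ≤ p.1 ∧ 1 ≤ q.1 ∧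
      (p.1 - 1) / 3 = (q.1 - 1) / 3 then 1
  else 0

/-- The bilinear form `⟨·,·⟩` on `F ⊗ ℚ = ℚ^19` given by the Gram matrix. -/
def BQ8 (x y : Fin 19 → ℚ) : ℚ := ∑ p, ∑ q, x p * gramQ8 p q * y q

/-- The basis vectors (`C₀`, `C_r^s`). -/
def evec : Fin 19 → (Fin 19 → ℚ) := fun n => Pi.single n 1

/-- `t_r = (C_r^1 + 2C_r^2 + 3C_r^3)/4` for `1 ≤ r ≤ 6` (here `r : Fin 6`). -/
def tvec : Fin 6 → (Fin 19 → ℚ) := fun r p =>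
  if p.1 = 3 * r.1 + 1 then 1 / 4
  else if p.1 = 3 * r.1 + 2 then 2 / 4
  else if p.1 = 3 * r.1 + 3 then 3 / 4
  else 0

/-- `δ₁ = t₁ + t₂ + t₃ + t₄ + 2t₅`. -/
def δ₁ : Fin 19 → ℚ := tvec 0 + tvec 1 + tvec 2 + tvec 3 + (2 : ℚ) • tvec 4

/-- `δ₂ = t₁ + 3t₂ + 2t₃ + t₅ + 3t₆`. -/
def δ₂ : Fin 19 → ℚ := tvec 0 + (3 : ℚ) • tvec 1 + (2 : ℚ) • tvec 2 + tvec 4 + (3 : ℚ) • tvec 5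

/-- The root lattice `F = F_{Q̂₈}`: the ℤ-span of the basis vectors. -/
def FQ8 : AddSubgroup (Fin 19 → ℚ) := AddSubgroup.closure (Set.range evec)

/-- The Kummer lattice `K = K_{Q̂₈} = F + ℤδ₁ + ℤδ₂`. -/
def KQ8 : AddSubgroup (Fin 19 → ℚ) := AddSubgroup.closure (Set.range evec ∪ {δ₁, δ₂})

/-!
Realize `A_n` as the integer vectors of coordinate sum zero in `ℤ^{n+1}`. A vector of sum zero with
all coordinates in `ℤ + c` has squared length at least `(n + 1) c (1 - c)`, since
`w (w + 1) ≥ 0` for integers `w`; so the cosets of `A₃` in its dual, indexed by `0, 1, 2, 3` mod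
`4`, have norm at least `0, 3/4, 1, 3/4`. The quotient `K/F` embeds as the code in `(ℤ/4)^6`
generated by `(1,1,1,1,2,0)` and `(1,3,2,0,1,3)`, and for each nonzero code word these six bounds
add up to at least `4`. Hence `⟨x, x⟩ ≤ -4` for every `x ∈ K` outside `F`.
-/

section TypeA

variable {n : ℕ} (R : Type*) [CommRing R]

/-- The simple root `α_i = ε_i - ε_{i+1}` of type `A_n`, in the standard realization of `A_n` inside
`R^{n+1}` with its dot product. -/
def simpleRoot (i : Fin n) : Fin (n + 1) → R :=
  Pi.single i.castSucc 1 - Pi.single i.succ 1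

lemma simpleRoot_dotProduct_simpleRoot (i j : Fin n) :
    simpleRoot R i ⬝ᵥ simpleRoot R j = CartanMatrix.A n i j := by
  simp only [simpleRoot, CartanMatrix.A, Matrix.of_apply, sub_dotProduct, dotProduct_sub,
    single_one_dotProduct, Pi.single_apply, Fin.ext_iff, Fin.val_castSucc, Fin.val_succ]
  split_ifs <;> first | omega | norm_num

variable {R}

/-- The vector `∑ i, u i • α_i` of the realization of `A_n` inside `R^{n+1}` whose coordinates in
the basis of simple roots are `u`. -/
def rootVector : (Fin n → R) →ₗ[R] (Fin (n + 1) → R) :=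
  Fintype.linearCombination R (simpleRoot R)

lemma rootVector_dotProduct_self (u : Fin n → R) :
    rootVector u ⬝ᵥ rootVector u = ∑ i, ∑ j, u i * CartanMatrix.A n i j * u j := by
  simp only [rootVector, Fintype.linearCombination_apply, sum_dotProduct]
  refine sum_congr rfl fun i _ => ?_
  rw [dotProduct_sum]
  refine sum_congr rfl fun j _ => ?_
  rw [smul_dotProduct, dotProduct_smul, simpleRoot_dotProduct_simpleRoot, smul_eq_mul, smul_eq_mul]
  ring

lemma sum_rootVector (u : Fin n → R) : ∑ m, rootVector u m = 0 := by
  simp only [rootVector, Fintype.linearCombination_apply, Finset.sum_apply, Pi.smul_apply]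
  rw [sum_comm]
  simp only [← smul_sum]
  simp [simpleRoot]

lemma rootVector_intCast (z : Fin n → ℤ) (m : Fin (n + 1)) :
    rootVector (fun i => (z i : R)) m = (rootVector z m : ℤ) := by
  simp [rootVector, Fintype.linearCombination_apply, simpleRoot, Pi.single_apply]

lemma sum_succ_smul_sub {M : Type*} [AddCommGroup M] (f : Fin (n + 1) → M) :
    ∑ i : Fin n, (i.val + 1) • (f i.castSucc - f i.succ) = ∑ m, f m - (n + 1) • f (Fin.last n) := by
  induction n with
  | zero => simp
  | succ n ih =>
    have h := ih fun i => f i.castSucc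
    rw [Fin.sum_univ_castSucc, Fin.sum_univ_castSucc f]
    simp only [Fin.val_castSucc, Fin.val_last, Fin.succ_castSucc, Fin.succ_last] at h ⊢
    rw [h]
    module

lemma rootVector_val_add_one :
    rootVector (fun i : Fin n => (i.val + 1 : R)) = 1 - Pi.single (Fin.last n) (n + 1 : R) := by
  have h := sum_succ_smul_sub fun m : Fin (n + 1) => (Pi.single m 1 : Fin (n + 1) → R)
  ext m
  simpa [rootVector, Fintype.linearCombination_apply, simpleRoot, Pi.single_apply] using
    congrFun h m

end TypeA

lemma card_mul_le_sum_sq_of_sum_eq_zero {ι K : Type*} [Fintype ι] [CommRing K] [LinearOrder K]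
    [IsStrictOrderedRing K] {w : ι → ℤ} {c : K} (hsum : ∑ i, (w i + c) = 0) :
    Fintype.card ι * (c * (1 - c)) ≤ ∑ i, (w i + c) ^ 2 := by
  have mul_add_one_nonneg (i : ι) : (0 : K) ≤ w i * (w i + 1) := by
    have : 0 ≤ w i * (w i + 1) := by
      rcases le_or_gt 0 (w i) with h | h <;> nlinarith
    exact_mod_cast this
  calc (Fintype.card ι : K) * (c * (1 - c))
      ≤ Fintype.card ι * (c * (1 - c)) + ∑ i, (w i * (w i + 1) : K) :=
        le_add_of_nonneg_right (sum_nonneg fun i _ => mul_add_one_nonneg i)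
    _ = ∑ i, (c * (1 - c) + w i * (w i + 1) + (2 * c - 1) * (w i + c)) := by
        rw [sum_add_distrib, sum_add_distrib, ← mul_sum univ _ (2 * c - 1), hsum]
        simp
    _ = ∑ i, (w i + c) ^ 2 := sum_congr rfl fun i _ => by ring

/-- For `n ≥ 1`, the minimal norm `k (n - k) / n`, `0 ≤ k < n`, of the `k`-th coset of the positive
definite lattice `A_{n-1}` in its dual, where the discriminant group is identified with `ℤ/n`. -/
def cosetNorm (n : ℕ) (k : ZMod n) : ℚ := k.val * (n - k.val) / n

section Glue

variable {n : ℕ} {z : Fin n → ℤ} {k : ℤ} {u : Fin n → ℚ}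

lemma exists_rootVector_eq_intCast_add (hu : ∀ i, u i = z i + k * ((i.val + 1) / (n + 1))) :
    ∃ w : Fin (n + 1) → ℤ, ∀ m,
      rootVector u m = w m + ((k : ZMod (n + 1)).val / (n + 1) : ℚ) := by
  set j : ℕ := (k : ZMod (n + 1)).val with hj
  have hk : (k : ℚ) = j + (n + 1) * (k / (n + 1) : ℤ) := by
    have : k = j + (n + 1) * (k / (n + 1)) := by
      rw [hj, ZMod.val_intCast, Nat.cast_succ, Int.emod_add_mul_ediv]
    exact_mod_cast this
  have hu' : u = (fun i => (z i : ℚ)) + (k / (n + 1) : ℚ) • fun i => (i.val + 1 : ℚ) := by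
    ext i
    simp only [hu, Pi.add_apply, Pi.smul_apply, smul_eq_mul]
    ring
  -- By `rootVector_val_add_one` the glue vector of `A_n` is `(1, …, 1) / (n + 1)` minus an integer
  -- vector.
  refine ⟨fun m => rootVector z m + k / (n + 1) - if m = Fin.last n then k else 0, fun m => ?_⟩
  rw [hu', map_add, map_smul, rootVector_val_add_one, Pi.add_apply, rootVector_intCast]
  simp only [Pi.smul_apply, Pi.sub_apply, Pi.one_apply, Pi.single_apply, smul_eq_mul]
  push_cast
  split_ifs <;> field_simp <;> linear_combination hk

lemma cosetNorm_le_rootVector_dotProduct_self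
    (hu : ∀ i, u i = z i + k * ((i.val + 1) / (n + 1))) :
    cosetNorm (n + 1) k ≤ rootVector u ⬝ᵥ rootVector u := by
  obtain ⟨w, hw⟩ := exists_rootVector_eq_intCast_add hu
  set c : ℚ := (k : ZMod (n + 1)).val / (n + 1) with hc
  have hsum : ∑ m, (w m + c) = 0 := by simp only [← hw, sum_rootVector]
  calc cosetNorm (n + 1) k = Fintype.card (Fin (n + 1)) * (c * (1 - c)) := by
        rw [cosetNorm, hc, Fintype.card_fin]
        push_cast
        field_simp
    _ ≤ ∑ m, (w m + c) ^ 2 := card_mul_le_sum_sq_of_sum_eq_zero hsum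
    _ = rootVector u ⬝ᵥ rootVector u := by simp only [dotProduct, hw, sq]

end Glue

lemma mem_closure_range_single_iff {ι R : Type*} [Finite ι] [DecidableEq ι] [Ring R] {x : ι → R} :
    x ∈ AddSubgroup.closure (Set.range fun i => Pi.single i (1 : R)) ↔
      ∃ z : ι → ℤ, ∀ i, x i = z i := by
  have := Fintype.ofFinite ι
  rw [← Submodule.span_int_eq_addSubgroupClosure, Submodule.mem_toAddSubgroup,
    Submodule.mem_span_range_iff_exists_fun]
  refine exists_congr fun z => ?_
  simp [funext_iff, Finset.sum_apply, Pi.single_apply, eq_comm]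

lemma mem_FQ8_iff {x : Fin 19 → ℚ} : x ∈ FQ8 ↔ ∃ z : Fin 19 → ℤ, ∀ p, x p = z p :=
  mem_closure_range_single_iff

lemma four_smul_tvec_mem_FQ8 (r : Fin 6) : (4 : ℤ) • tvec r ∈ FQ8 := by
  refine mem_FQ8_iff.mpr ⟨fun p => if p.1 = 3 * r.1 + 1 then 1 else if p.1 = 3 * r.1 + 2 then 2
    else if p.1 = 3 * r.1 + 3 then 3 else 0, fun p => ?_⟩
  simp only [Pi.smul_apply, tvec]
  split_ifs <;> norm_num

/-- The linear combination `a δ₁ + b δ₂` as a vector of coefficients of `t₁, …, t₆`. Modulo `4`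
these vectors form the glue code of `K` over `F`. -/
def glueWord {R : Type*} [CommRing R] (a b : R) : Fin 6 → R :=
  a • ![1, 1, 1, 1, 2, 0] + b • ![1, 3, 2, 0, 1, 3]

lemma intCast_glueWord {R : Type*} [CommRing R] (a b : ℤ) (r : Fin 6) :
    ((glueWord a b r : ℤ) : R) = glueWord (a : R) (b : R) r := by
  fin_cases r <;> simp [glueWord]

lemma smul_δ₁_add_smul_δ₂ (a b : ℤ) : a • δ₁ + b • δ₂ = ∑ r, glueWord a b r • tvec r := by
  simp only [Fin.sum_univ_six, glueWord, δ₁, δ₂, Pi.add_apply, Pi.smul_apply, smul_eq_mul,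
    Matrix.cons_val]
  module

lemma mem_KQ8_iff {x : Fin 19 → ℚ} :
    x ∈ KQ8 ↔ ∃ f ∈ FQ8, ∃ a b : ℤ, x = f + ∑ r, glueWord a b r • tvec r := by
  simp only [KQ8, AddSubgroup.closure_union, AddSubgroup.mem_sup, AddSubgroup.mem_closure_pair,
    ← smul_δ₁_add_smul_δ₂, FQ8]
  constructor
  · rintro ⟨f, hf, _, ⟨a, b, rfl⟩, rfl⟩
    exact ⟨f, hf, a, b, rfl⟩
  · rintro ⟨f, hf, a, b, rfl⟩
    exact ⟨f, hf, _, ⟨a, b, rfl⟩, rfl⟩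

lemma four_le_sum_cosetNorm_glueWord {a b : ZMod 4} (h : glueWord a b ≠ 0) :
    4 ≤ ∑ r, cosetNorm 4 (glueWord a b r) := by
  have sixteen_le : 16 ≤ ∑ r, ((glueWord a b r).val : ℤ) * (4 - (glueWord a b r).val) := by
    decide +revert
  simp only [cosetNorm, ← sum_div]
  rw [le_div_iff₀ (by norm_num)]
  calc (4 * (4 : ℕ) : ℚ) = 16 := by norm_num
    _ ≤ _ := by exact_mod_cast sixteen_le

/-- The position of the basis vector `C_{r+1}^{s+1}`; position `0` is `C₀`. -/
def blockIndex (r : Fin 6) (s : Fin 3) : Fin 19 := (finProdFinEquiv (r, s)).succ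

lemma sum_eq_add_sum_blockIndex {M : Type*} [AddCommMonoid M] (f : Fin 19 → M) :
    ∑ p, f p = f 0 + ∑ r, ∑ s, f (blockIndex r s) := by
  rw [Fin.sum_univ_succ, ← (finProdFinEquiv (m := 6) (n := 3)).sum_comp, Fintype.sum_prod_type]
  rfl

lemma gramQ8_zero_blockIndex (r : Fin 6) (s : Fin 3) : gramQ8 0 (blockIndex r s) = 0 := by
  decide +revert

lemma gramQ8_blockIndex_zero (r : Fin 6) (s : Fin 3) : gramQ8 (blockIndex r s) 0 = 0 := by
  decide +revert

lemma gramQ8_blockIndex_blockIndex (r r' : Fin 6) (s s' : Fin 3) :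
    gramQ8 (blockIndex r s) (blockIndex r' s') =
      if r = r' then -(CartanMatrix.A 3 s s' : ℚ) else 0 := by
  simp only [gramQ8, blockIndex, CartanMatrix.A, Fin.ext_iff, Matrix.of_apply, Fin.val_succ,
    finProdFinEquiv_apply_val]
  split_ifs <;> first | omega | norm_num

lemma tvec_blockIndex (r r' : Fin 6) (s : Fin 3) :
    tvec r (blockIndex r' s) = if r' = r then (s.val + 1 : ℚ) / 4 else 0 := by
  simp only [tvec, blockIndex, Fin.ext_iff, Fin.val_succ, finProdFinEquiv_apply_val]
  fin_cases s <;> dsimp only <;> split_ifs <;> first | omega | norm_num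

lemma BQ8_self_eq (x : Fin 19 → ℚ) :
    BQ8 x x = -(2 * x 0 ^ 2 + ∑ r, rootVector (fun s => x (blockIndex r s)) ⬝ᵥ
      rootVector (fun s => x (blockIndex r s))) := by
  have gram_zero : gramQ8 0 0 = -2 := rfl
  simp only [BQ8, sum_eq_add_sum_blockIndex, gram_zero, gramQ8_zero_blockIndex,
    gramQ8_blockIndex_zero, gramQ8_blockIndex_blockIndex, rootVector_dotProduct_self]
  simp only [zero_mul, mul_zero, sum_const_zero, add_zero, zero_add, mul_ite, ite_mul,
    sum_ite_irrel, sum_ite_eq, mem_univ, if_true, mul_neg, neg_mul, sum_neg_distrib]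
  ring

lemma BQ8_self_le_neg_sum_cosetNorm {f : Fin 19 → ℚ} (hf : f ∈ FQ8) (k : Fin 6 → ℤ) :
    BQ8 (f + ∑ r, k r • tvec r) (f + ∑ r, k r • tvec r) ≤ -∑ r, cosetNorm 4 (k r) := by
  obtain ⟨z, hz⟩ := mem_FQ8_iff.mp hf
  have block (r : Fin 6) (s : Fin 3) : (f + ∑ r, k r • tvec r) (blockIndex r s) =
      z (blockIndex r s) + k r * ((s.val + 1) / (3 + 1)) := by
    simp only [Pi.add_apply, Finset.sum_apply, Pi.smul_apply, hz, tvec_blockIndex, smul_ite,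
      smul_zero, sum_ite_eq, mem_univ, if_true]
    rw [zsmul_eq_mul]
    norm_num
  rw [BQ8_self_eq, neg_le_neg_iff]
  refine le_add_of_nonneg_of_le (by positivity) (sum_le_sum fun r _ => ?_)
  exact cosetNorm_le_rootVector_dotProduct_self (block r)

lemma BQ8_self_le_neg_four_of_notMem_FQ8 {x : Fin 19 → ℚ} (hK : x ∈ KQ8) (hF : x ∉ FQ8) :
    BQ8 x x ≤ -4 := by
  obtain ⟨f, hf, a, b, rfl⟩ := mem_KQ8_iff.mp hK
  have hne : glueWord (a : ZMod 4) (b : ZMod 4) ≠ 0 := by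
    contrapose hF
    refine add_mem hf (sum_mem fun r _ => ?_)
    obtain ⟨m, hm⟩ : (4 : ℤ) ∣ glueWord a b r :=
      (ZMod.intCast_zmod_eq_zero_iff_dvd _ 4).mp (by rw [intCast_glueWord, hF, Pi.zero_apply])
    rw [hm, mul_comm, mul_smul]
    exact zsmul_mem (four_smul_tvec_mem_FQ8 r) m
  refine (BQ8_self_le_neg_sum_cosetNorm hf _).trans (neg_le_neg ?_)
  simpa only [intCast_glueWord] using four_le_sum_cosetNorm_glueWord hne

theorem roots_of_KQ8_eq_roots_of_FQ8 :
    (∀ x ∈ KQ8, BQ8 x x = -2 → x ∈ FQ8) ∧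
    {x : Fin 19 → ℚ | x ∈ KQ8 ∧ BQ8 x x = -2} =
      {x : Fin 19 → ℚ | x ∈ FQ8 ∧ BQ8 x x = -2} := by
  have mem_FQ8 (x : Fin 19 → ℚ) (hK : x ∈ KQ8) (hx : BQ8 x x = -2) : x ∈ FQ8 := by
    by_contra hF
    linarith [BQ8_self_le_neg_four_of_notMem_FQ8 hK hF]
  have FQ8_le_KQ8 : FQ8 ≤ KQ8 := AddSubgroup.closure_mono Set.subset_union_left
  exact ⟨mem_FQ8, Set.ext fun x =>
    ⟨fun ⟨hK, hx⟩ => ⟨mem_FQ8 x hK hx, hx⟩, fun ⟨hF, hx⟩ => ⟨FQ8_le_KQ8 hF, hx⟩⟩⟩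
end

section
/- Every element x of the lattice K = K_{T̂₂₄} = F + ℤγ with ⟨x,x⟩ = −2 already lies in F = F_{T̂₂₄}; that is, the roots of K_{T̂₂₄} coincide with the roots of the root lattice A₂^{⊕4} ⊕ A₃^{⊕2} ⊕ A₅. -/
/- STATEMENT 14: Every element x of K = K_{T̂₂₄} = F + ℤγ with ⟨x,x⟩ = −2 already lies
in F = F_{T̂₂₄}; that is, the roots of K_{T̂₂₄} coincide with the roots of the root
lattice A₂^{⊕4} ⊕ A₃^{⊕2} ⊕ A₅. -/

open Finset

/-- Component label of index `n` for the lattice `A₂^{⊕4} ⊕ A₃^{⊕2} ⊕ A₅`: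
indices 0–7 are the four `A₂`'s (pairs), 8–13 the two `A₃`'s (triples),
14–18 the `A₅` (chain). -/
def compT24 : ℕ → ℕ := fun n =>
  if n < 8 then n / 2 else if n < 14 then 4 + (n - 8) / 3 else 8

/-- Gram matrix of the (negative definite) root lattice `A₂^{⊕4} ⊕ A₃^{⊕2} ⊕ A₅`. -/
def gramT24 : Fin 19 → Fin 19 → ℚ := fun p q =>
  if p = q then -2
  else if (p.1 = q.1 + 1 ∨ q.1 = p.1 + 1) ∧ compT24 p.1 = compT24 q.1 then 1
  else 0

/-- The bilinear form `⟨·,·⟩` on `F ⊗ ℚ = ℚ^19` given by the Gram matrix. -/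
def BT24 (x y : Fin 19 → ℚ) : ℚ := ∑ p, ∑ q, x p * gramT24 p q * y q

/-- `γ = (1/3)(Σ_{r=1}^{4}(C_r^1 + 2C_r^2) + (e₁ + 2e₂) + (e₄ + 2e₅))`. -/
def γvec : Fin 19 → ℚ := fun p =>
  if p.1 = 0 ∨ p.1 = 2 ∨ p.1 = 4 ∨ p.1 = 6 ∨ p.1 = 14 ∨ p.1 = 17 then 1 / 3
  else if p.1 = 1 ∨ p.1 = 3 ∨ p.1 = 5 ∨ p.1 = 7 ∨ p.1 = 15 ∨ p.1 = 18 then 2 / 3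
  else 0

/-- The root lattice `F = F_{T̂₂₄}`: the ℤ-span of the basis vectors. -/
def FT24 : AddSubgroup (Fin 19 → ℚ) := AddSubgroup.closure (Set.range evec)

/-- The Kummer lattice `K = K_{T̂₂₄} = F + ℤγ`. -/
def KT24 : AddSubgroup (Fin 19 → ℚ) := AddSubgroup.closure (Set.range evec ∪ {γvec})

/-!
Since `3γ ∈ F`, an element of `K` outside `F` has the form `f + kγ` with `f ∈ F` and `3 ∤ k`, so in
each of the four `A₂` summands it lies in a nontrivial coset of the root lattice in its dual.
Scaled by `3`, the coordinates `(m, n)` of such a component are integers with `3 ∣ m + n` and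
`m ≠ 0`, so the positive integer `m² - mn + n² = (m + n)² - 3mn` is divisible by `3`; hence the
component has square at most `-2/3`. The form is nonpositive on the other summands, so the total
square is at most `4 · (-2/3) < -2`.
-/

section TypeAForm

variable {R : Type*} {n : ℕ}

/-- The quadratic form `2 ∑ xᵢ² - 2 ∑ xᵢ xᵢ₊₁` of the root lattice `A_{n+1}` in the coordinates of
its simple roots, with the positive definite sign convention (opposite to that of `BT24`). -/
def typeAForm [CommRing R] (x : Fin (n + 1) → R) : R :=
  2 * (∑ i, x i ^ 2 - ∑ i : Fin n, x i.castSucc * x i.succ)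

lemma typeAForm_eq_sum_sq [CommRing R] (x : Fin (n + 1) → R) :
    typeAForm x =
      x 0 ^ 2 + ∑ i : Fin n, (x i.succ - x i.castSucc) ^ 2 + x (Fin.last n) ^ 2 := by
  have hsq : ∑ i : Fin n, (x i.succ - x i.castSucc) ^ 2 =
      ∑ i : Fin n, x i.succ ^ 2 + ∑ i : Fin n, x i.castSucc ^ 2
        - 2 * ∑ i : Fin n, x i.castSucc * x i.succ := by
    rw [Finset.mul_sum, ← Finset.sum_add_distrib, ← Finset.sum_sub_distrib]
    exact Finset.sum_congr rfl fun i _ => by ring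
  have hsucc := Fin.sum_univ_succ fun i => x i ^ 2
  have hcast := Fin.sum_univ_castSucc fun i => x i ^ 2
  rw [typeAForm, hsq]
  linear_combination hsucc + hcast

lemma typeAForm_nonneg [CommRing R] [LinearOrder R] [IsStrictOrderedRing R]
    (x : Fin (n + 1) → R) : 0 ≤ typeAForm x := by
  rw [typeAForm_eq_sum_sq]
  positivity

lemma typeAForm_pair [CommRing R] (u v : R) :
    typeAForm ![u, v] = 2 * (u ^ 2 - u * v + v ^ 2) := by
  simp only [typeAForm, Fin.sum_univ_succ, Fin.sum_univ_zero, Fin.castSucc_zero,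
    Matrix.cons_val_zero, Matrix.cons_val_succ]
  ring

lemma three_le_sq_sub_mul_add_sq {m n : ℤ} (hm : m ≠ 0) (hmn : 3 ∣ m + n) :
    3 ≤ m ^ 2 - m * n + n ^ 2 := by
  have hpos : 0 < m ^ 2 - m * n + n ^ 2 := by
    nlinarith [sq_nonneg (m - 2 * n), sq_pos_of_ne_zero hm]
  have hdvd : 3 ∣ m ^ 2 - m * n + n ^ 2 := by
    have hsplit : m ^ 2 - m * n + n ^ 2 = (m + n) * (m + n) - 3 * (m * n) := by ring
    rw [hsplit]
    exact dvd_sub (hmn.mul_right _) (dvd_mul_right _ _)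
  exact Int.le_of_dvd hpos hdvd

lemma two_thirds_le_typeAForm_pair [Field R] [LinearOrder R] [IsStrictOrderedRing R]
    (a b : ℤ) {k : ℤ} (hk : ¬ 3 ∣ k) :
    2 / 3 ≤ typeAForm ![(a + k * (1 / 3) : R), b + k * (2 / 3)] := by
  have hint : 3 ≤ (3 * a + k) ^ 2 - (3 * a + k) * (3 * b + 2 * k) + (3 * b + 2 * k) ^ 2 :=
    three_le_sq_sub_mul_add_sq (by omega) (by omega)
  have hcast : (3 : R) ≤
      (3 * a + k) ^ 2 - (3 * a + k) * (3 * b + 2 * k) + (3 * b + 2 * k) ^ 2 := by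
    exact_mod_cast hint
  rw [typeAForm_pair]
  linear_combination (2 / 9) * hcast

end TypeAForm

lemma closure_range_single {ι G : Type*} [Finite ι] [DecidableEq ι] [AddGroup G] (g : G) :
    AddSubgroup.closure (Set.range fun i : ι => (Pi.single i g : ι → G)) =
      AddSubgroup.pi Set.univ fun _ => AddSubgroup.zmultiples g := by
  apply le_antisymm
  · rw [AddSubgroup.closure_le]
    rintro _ ⟨i, rfl⟩ j -
    by_cases h : j = i
    · subst h
      simp
    · simp [h]
  · rw [AddSubgroup.pi_le_iff]
    intro i
    rw [AddMonoidHom.map_zmultiples, AddSubgroup.zmultiples_le]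
    exact AddSubgroup.subset_closure ⟨i, rfl⟩

lemma mem_FT24_iff {x : Fin 19 → ℚ} : x ∈ FT24 ↔ ∀ p, ∃ n : ℤ, (n : ℚ) = x p := by
  have h : FT24 = AddSubgroup.pi Set.univ fun _ => AddSubgroup.zmultiples 1 :=
    closure_range_single 1
  simp [h, AddSubgroup.mem_pi, AddSubgroup.mem_zmultiples_iff]

lemma three_zsmul_γvec_mem_FT24 : (3 : ℤ) • γvec ∈ FT24 := by
  refine mem_FT24_iff.mpr fun p => ?_
  simp only [Pi.smul_apply, γvec]
  split_ifs
  · exact ⟨1, by norm_num⟩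
  · exact ⟨2, by norm_num⟩
  · exact ⟨0, by norm_num⟩

lemma KT24_eq_sup : KT24 = FT24 ⊔ AddSubgroup.zmultiples γvec := by
  rw [KT24, FT24, AddSubgroup.closure_union, AddSubgroup.zmultiples_eq_closure]

lemma exists_eq_add_zsmul_γvec {x : Fin 19 → ℚ} (hK : x ∈ KT24) (hF : x ∉ FT24) :
    ∃ f ∈ FT24, ∃ k : ℤ, ¬ 3 ∣ k ∧ x = f + k • γvec := by
  rw [KT24_eq_sup, AddSubgroup.mem_sup] at hK
  obtain ⟨f, hf, _, ⟨k, rfl⟩, rfl⟩ := hK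
  refine ⟨f, hf, k, ?_, rfl⟩
  rintro ⟨l, rfl⟩
  have hγ : (3 * l) • γvec ∈ FT24 := by
    rw [mul_comm, mul_zsmul]
    exact FT24.zsmul_mem three_zsmul_γvec_mem_FT24 l
  exact hF (FT24.add_mem hf hγ)

lemma BT24_self (x : Fin 19 → ℚ) :
    BT24 x x =
      -(typeAForm ![x 0, x 1] + typeAForm ![x 2, x 3] + typeAForm ![x 4, x 5]
        + typeAForm ![x 6, x 7]
        + typeAForm ![x 8, x 9, x 10] + typeAForm ![x 11, x 12, x 13]
        + typeAForm ![x 14, x 15, x 16, x 17, x 18]) := by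
  simp only [BT24, gramT24, compT24, typeAForm, Fin.sum_univ_succ, Fin.sum_univ_zero,
    Fin.reduceSucc, Fin.reduceEq, Fin.coe_ofNat_eq_mod, Fin.castSucc_zero, Fin.castSucc_succ,
    Nat.reduceMod, Nat.reduceAdd, Nat.reduceSub, Nat.reduceDiv, Nat.reduceLT, Nat.reduceEqDiff,
    ↓reduceIte, true_or, false_or, true_and, false_and, Matrix.cons_val_succ,
    Matrix.cons_val_zero]
  ring

lemma two_thirds_le_typeAForm_pair_add_zsmul_γvec {f : Fin 19 → ℚ} (hf : f ∈ FT24) {k : ℤ}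
    (hk : ¬ 3 ∣ k) {p q : Fin 19} (hp : γvec p = 1 / 3) (hq : γvec q = 2 / 3) :
    2 / 3 ≤ typeAForm ![(f + k • γvec) p, (f + k • γvec) q] := by
  obtain ⟨a, ha⟩ := mem_FT24_iff.mp hf p
  obtain ⟨b, hb⟩ := mem_FT24_iff.mp hf q
  have hxp : (f + k • γvec) p = a + k * (1 / 3) := by
    rw [Pi.add_apply, Pi.smul_apply, zsmul_eq_mul, ha, hp]
  have hxq : (f + k • γvec) q = b + k * (2 / 3) := by
    rw [Pi.add_apply, Pi.smul_apply, zsmul_eq_mul, hb, hq]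
  rw [hxp, hxq]
  exact two_thirds_le_typeAForm_pair a b hk

lemma BT24_self_le_of_notMem_FT24 {x : Fin 19 → ℚ} (hK : x ∈ KT24) (hF : x ∉ FT24) :
    BT24 x x ≤ -(8 / 3) := by
  obtain ⟨f, hf, k, hk, rfl⟩ := exists_eq_add_zsmul_γvec hK hF
  set x := f + k • γvec
  have hA2 {p q : Fin 19} (hp : γvec p = 1 / 3) (hq : γvec q = 2 / 3) :
      2 / 3 ≤ typeAForm ![x p, x q] :=
    two_thirds_le_typeAForm_pair_add_zsmul_γvec hf hk hp hq
  have hC₁ : 2 / 3 ≤ typeAForm ![x 0, x 1] := hA2 (by simp [γvec]) (by simp [γvec])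
  have hC₂ : 2 / 3 ≤ typeAForm ![x 2, x 3] := hA2 (by simp [γvec]) (by simp [γvec])
  have hC₃ : 2 / 3 ≤ typeAForm ![x 4, x 5] := hA2 (by simp [γvec]) (by simp [γvec])
  have hC₄ : 2 / 3 ≤ typeAForm ![x 6, x 7] := hA2 (by simp [γvec]) (by simp [γvec])
  have hD₁ := typeAForm_nonneg ![x 8, x 9, x 10]
  have hD₂ := typeAForm_nonneg ![x 11, x 12, x 13]
  have he := typeAForm_nonneg ![x 14, x 15, x 16, x 17, x 18]
  rw [BT24_self]
  linarith

lemma mem_FT24_of_BT24_self_eq_neg_two {x : Fin 19 → ℚ} (hK : x ∈ KT24)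
    (hx : BT24 x x = -2) : x ∈ FT24 := by
  by_contra hF
  linarith [BT24_self_le_of_notMem_FT24 hK hF]

theorem roots_of_KT24_eq_roots_of_FT24 :
    (∀ x ∈ KT24, BT24 x x = -2 → x ∈ FT24) ∧
    {x : Fin 19 → ℚ | x ∈ KT24 ∧ BT24 x x = -2} =
      {x : Fin 19 → ℚ | x ∈ FT24 ∧ BT24 x x = -2} := by
  have hroot : ∀ x ∈ KT24, BT24 x x = -2 → x ∈ FT24 :=
    fun _ => mem_FT24_of_BT24_self_eq_neg_two
  have hle : FT24 ≤ KT24 := AddSubgroup.closure_mono Set.subset_union_left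
  refine ⟨hroot, Set.ext fun x => ?_⟩
  exact ⟨fun ⟨hK, hx⟩ => ⟨hroot x hK hx, hx⟩, fun ⟨hF, hx⟩ => ⟨hle hF, hx⟩⟩
end
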